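/- arXiv:1310.0838 — 9 statements merged into one kernel-verified Lean document; each statement's English description precedes it below -/
import Mathlib

section
/- Let P be a finite poset, G a finite group acting on P by automorphisms, g ∈ G, and n ≥ 1. Then the map sending φ to the function [x]_g ↦ φ(x) is a bijection between the set Hom(P,[n])^g of order preserving maps P → [n] fixed by g and the set Hom(P_g,[n]) of order preserving maps from the quotient poset P_g to [n]. In particular, |Hom(P,[n])^g| = Ω_{P_g}(n). -/
/-- The relation on the set `P_g` of `⟨g⟩`-orbits of `P`: `[x]_g ≺ [y]_g` whenever there
exist representatives `x̃ ∈ [x]_g` and `ỹ ∈ [y]_g` with `x̃ ≺ ỹ` in `P`. -/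
def quotPosetRel {P G : Type*} [PartialOrder P] [Group G] [MulAction G P] (g : G)
    (a b : Quotient (MulAction.orbitRel (Subgroup.zpowers g) P)) : Prop :=
  ∃ x y : P, Quotient.mk (MulAction.orbitRel (Subgroup.zpowers g) P) x = a ∧
    Quotient.mk (MulAction.orbitRel (Subgroup.zpowers g) P) y = b ∧ x < y

section OrbitInvariance

variable {G X α : Type*} [Group G] [MulAction G X]

attribute [local instance] arrowAction

theorem orbitRel_le_ker_iff_le_stabilizer {H : Subgroup G} {f : X → α} :
    MulAction.orbitRel H X ≤ Setoid.ker f ↔ H ≤ MulAction.stabilizer G f := by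
  constructor
  · intro hker h hh
    funext x
    exact hker ⟨⟨h⁻¹, inv_mem hh⟩, rfl⟩
  · rintro hstab _ y ⟨⟨h, hh⟩, rfl⟩
    calc
      f (h • y) = f (h⁻¹ • h • y) := (congrFun (hstab hh) (h • y)).symm
      _ = f y := by rw [inv_smul_smul]

theorem orbitRel_zpowers_le_ker_iff {g : G} {f : X → α} :
    MulAction.orbitRel (Subgroup.zpowers g) X ≤ Setoid.ker f ↔ ∀ x, f (g⁻¹ • x) = f x := by
  rw [orbitRel_le_ker_iff_le_stabilizer, Subgroup.zpowers_le, MulAction.mem_stabilizer_iff,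
    funext_iff]
  rfl

end OrbitInvariance

section OrderPreserving

variable {P G α : Type*} [PartialOrder P] [Group G] [MulAction G P] [LE α]

theorem forall_quotPosetRel_imp_le_iff {g : G}
    {ψ : Quotient (MulAction.orbitRel (Subgroup.zpowers g) P) → α} :
    (∀ a b, quotPosetRel g a b → ψ a ≤ ψ b) ↔
      ∀ p q : P, p < q → ψ (Quotient.mk _ p) ≤ ψ (Quotient.mk _ q) := by
  constructor
  · exact fun hψ p q hpq => hψ _ _ ⟨p, q, rfl, rfl, hpq⟩
  · rintro hψ _ _ ⟨p, q, rfl, rfl, hpq⟩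
    exact hψ p q hpq

theorem stmt_2_general (g : G) :
    ∃ F : {φ : P → α // (∀ p q : P, p < q → φ p ≤ φ q) ∧ ∀ x : P, φ (g⁻¹ • x) = φ x} ≃
        {ψ : Quotient (MulAction.orbitRel (Subgroup.zpowers g) P) → α //
          ∀ a b, quotPosetRel (P := P) g a b → ψ a ≤ ψ b},
      ∀ φ (x : P),
        (F φ).1 (Quotient.mk (MulAction.orbitRel (Subgroup.zpowers g) P) x) = φ.1 x := by
  let orbits := MulAction.orbitRel (Subgroup.zpowers g) P
  let OrderPreserving (φ : P → α) : Prop := ∀ p q, p < q → φ p ≤ φ q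
  have fixed_iff_factors (φ : P → α) :
      (OrderPreserving φ ∧ ∀ x, φ (g⁻¹ • x) = φ x) ↔
        orbits ≤ Setoid.ker φ ∧ OrderPreserving φ := by
    rw [orbitRel_zpowers_le_ker_iff, and_comm]
  let descend := (Setoid.liftEquiv (β := α) orbits).subtypeEquiv
    (p := fun φ => OrderPreserving φ.1) (q := fun ψ => ∀ a b, quotPosetRel g a b → ψ a ≤ ψ b)
    fun φ => (forall_quotPosetRel_imp_le_iff (ψ := Setoid.liftEquiv orbits φ)).symm
  exact ⟨(Equiv.subtypeEquivRight fixed_iff_factors).trans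
    ((Equiv.subtypeSubtypeEquivSubtypeInter _ OrderPreserving).symm.trans descend),
    fun _ _ => rfl⟩

end OrderPreserving

/-- Let `P` be a finite poset, `G` a finite group acting on `P` by
automorphisms, `g ∈ G` and `n ≥ 1`.  The map sending `φ` to `[x]_g ↦ φ(x)` is a bijection
between the set `Hom(P,[n])^g` of order preserving maps `P → [n]` fixed by `g`
(i.e. with `φ(g⁻¹ • x) = φ(x)` for all `x`) and the set `Hom(P_g,[n])` of order preserving
maps from the quotient poset `P_g` to `[n]`.  In particular the two sets have the same
cardinality, i.e. `|Hom(P,[n])^g| = Ω_{P_g}(n)`. -/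
theorem stmt_2 {P G : Type*} [PartialOrder P] [Fintype P] [Group G] [Fintype G]
    [MulAction G P] (hact : ∀ (g : G) (p q : P), p < q → g • p < g • q)
    (g : G) (n : ℕ) (hn : 1 ≤ n) :
    (∃ F : {φ : P → Fin n // (∀ p q : P, p < q → φ p ≤ φ q) ∧ ∀ x : P, φ (g⁻¹ • x) = φ x} →
        {ψ : Quotient (MulAction.orbitRel (Subgroup.zpowers g) P) → Fin n //
          ∀ a b, quotPosetRel (P := P) g a b → ψ a ≤ ψ b},
      Function.Bijective F ∧
        ∀ φ (x : P),
          (F φ).1 (Quotient.mk (MulAction.orbitRel (Subgroup.zpowers g) P) x) = φ.1 x) ∧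
    Nat.card {φ : P → Fin n // (∀ p q : P, p < q → φ p ≤ φ q) ∧ ∀ x : P, φ (g⁻¹ • x) = φ x} =
      Nat.card {ψ : Quotient (MulAction.orbitRel (Subgroup.zpowers g) P) → Fin n //
        ∀ a b, quotPosetRel (P := P) g a b → ψ a ≤ ψ b} := by
  obtain ⟨F, hF⟩ := stmt_2_general (P := P) (α := Fin n) g
  exact ⟨⟨F, F.bijective, hF⟩, Nat.card_congr F⟩
end

section
/- Let P be a finite poset and G a finite group acting on P by automorphisms. Then for all n ≥ 1, the number of G-orbits of order preserving maps P → [n] satisfies Ω_{P,G}(n) = |Hom(P,[n])/G| = (1/|G|) · Σ_{g∈G} Ω_{P_g}(n), where the sum ranges over all g ∈ G and P_g is the quotient poset of P by ⟨g⟩. -/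
/-!
Burnside's lemma writes the number of orbits on homomorphisms `P → α` as the average over `g` of the
number of homomorphisms fixed by `g`. A homomorphism is fixed by `g` exactly when it is constant on
the `⟨g⟩`-orbits of `P`, that is, when it descends to a homomorphism out of `P_g`.
-/

open MulAction

section Burnside

variable {G X K : Type*} [Group G] [Fintype G] [MulAction G X] [Finite X] [DivisionSemiring K]

theorem card_orbits_eq_inv_mul_sum_card_fixedBy (hG : (Fintype.card G : K) ≠ 0) :
    (Nat.card (orbitRel.Quotient G X) : K) =
      (Fintype.card G : K)⁻¹ * ∑ g : G, (Nat.card (fixedBy X g) : K) := by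
  have := Fintype.ofFinite (orbitRel.Quotient G X)
  have (g : G) := Fintype.ofFinite (fixedBy X g)
  have burnside : ∑ g : G, Nat.card (fixedBy X g) =
      Nat.card (orbitRel.Quotient G X) * Fintype.card G := by
    simp only [Nat.card_eq_fintype_card]
    exact sum_card_fixedBy_eq_card_orbits_mul_card_group G X
  rw [eq_inv_mul_iff_mul_eq₀ hG, ← Nat.cast_sum, burnside, ← Nat.cast_mul, mul_comm]

end Burnside

section RelHom

variable {P α : Type*} {r : P → P → Prop} {s : α → α → Prop}

/-- Relation-preserving functions, presented as a subtype, are the same as relation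
homomorphisms. -/
def subtypeEquivRelHom : {φ : P → α // ∀ p q, r p q → s (φ p) (φ q)} ≃ (r →r s) where
  toFun φ := ⟨φ.1, φ.2 _ _⟩
  invFun f := ⟨f, fun _ _ => f.map_rel⟩

/-- The universal property of a quotient relation: homomorphisms constant on the classes of `S`
correspond to homomorphisms out of the quotient by `S`, which carries the image of `r`. -/
def relHomQuotientEquiv (S : Setoid P) :
    {f : r →r s // S ≤ Setoid.ker f} ≃
      (Relation.Map r (Quotient.mk S) (Quotient.mk S) →r s) where
  toFun f := ⟨Quotient.lift f.1 f.2, by rintro _ _ ⟨x, y, hxy, rfl, rfl⟩; exact f.1.map_rel hxy⟩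
  invFun h := ⟨⟨fun x => h (Quotient.mk S x), fun hxy => h.map_rel ⟨_, _, hxy, rfl, rfl⟩⟩,
    fun _ _ hxy => congrArg h (Quotient.sound hxy)⟩
  right_inv h := RelHom.ext (Quotient.ind fun _ => rfl)

end RelHom

section Action

variable {P α G : Type*} {r : P → P → Prop} {s : α → α → Prop} [Group G] [MulAction G P]
  [CovariantClass G P (· • ·) r]

/-- A group preserving a relation on `P` acts on the homomorphisms out of `P` by
`(g • f) x = f (g⁻¹ • x)`. As with `arrowAction`, this is not a global instance. -/
abbrev relHomArrowAction : MulAction G (r →r s) where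
  smul g f := ⟨fun x => f (g⁻¹ • x), fun h => f.map_rel (CovariantClass.elim g⁻¹ h)⟩
  one_smul f := RelHom.ext fun x => congrArg f (by rw [inv_one, one_smul])
  mul_smul g h f := RelHom.ext fun x => congrArg f (by rw [mul_inv_rev, mul_smul])

attribute [local instance] relHomArrowAction

theorem relHom_smul_apply (g : G) (f : r →r s) (x : P) : (g • f) x = f (g⁻¹ • x) :=
  rfl

theorem mem_fixedBy_relHom_iff {g : G} {f : r →r s} :
    f ∈ fixedBy (r →r s) g ↔ orbitRel (Subgroup.zpowers g) P ≤ Setoid.ker f := by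
  constructor
  · rintro hf _ y ⟨⟨_, j, rfl⟩, rfl⟩
    have hfixed : g ^ (-j) • f = f := mem_fixedBy_zpow hf (-j)
    calc f (g ^ j • y) = (g ^ (-j) • f) y := by rw [relHom_smul_apply, zpow_neg, inv_inv]
      _ = f y := by rw [hfixed]
  · intro hf
    refine RelHom.ext fun x => hf ?_
    exact orbitRel_apply.2 ⟨⟨g⁻¹, inv_mem (Subgroup.mem_zpowers g)⟩, rfl⟩

/-- Homomorphisms fixed by `g` are the homomorphisms out of the quotient `P_g` by `⟨g⟩`. -/
def fixedByRelHomEquiv (g : G) :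
    fixedBy (r →r s) g ≃
      (Relation.Map r (Quotient.mk (orbitRel (Subgroup.zpowers g) P))
        (Quotient.mk (orbitRel (Subgroup.zpowers g) P)) →r s) :=
  (Equiv.subtypeEquivRight fun _ => mem_fixedBy_relHom_iff).trans (relHomQuotientEquiv _)

/-- The orbit space of the action on homomorphisms, with the action and the homomorphisms
spelled out in terms of functions. -/
def quotEquivOrbitRelQuotientRelHom :
    Quot (fun φ ψ : {φ : P → α // ∀ p q, r p q → s (φ p) (φ q)} =>
      ∃ g : G, ∀ x, ψ.1 x = φ.1 (g⁻¹ • x)) ≃ orbitRel.Quotient G (r →r s) :=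
  Quot.congr subtypeEquivRelHom fun φ ψ => by
    change _ ↔ orbitRel G (r →r s) (subtypeEquivRelHom φ) (subtypeEquivRelHom ψ)
    rw [Setoid.comm', orbitRel_apply, mem_orbit_iff]
    refine exists_congr fun g => ?_
    rw [RelHom.ext_iff]
    exact forall_congr' fun x => eq_comm

end Action

theorem stmt_3_general {P α G K : Type*} {r : P → P → Prop} {s : α → α → Prop}
    [DivisionSemiring K] [Group G] [Fintype G] [MulAction G P]
    [Finite {φ : P → α // ∀ p q, r p q → s (φ p) (φ q)}]
    (hact : ∀ (g : G) (p q : P), r p q → r (g • p) (g • q)) (hG : (Fintype.card G : K) ≠ 0) :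
    (Nat.card (Quot (fun φ ψ : {φ : P → α // ∀ p q, r p q → s (φ p) (φ q)} =>
        ∃ g : G, ∀ x, ψ.1 x = φ.1 (g⁻¹ • x))) : K) =
      (Fintype.card G : K)⁻¹ * ∑ g : G,
        (Nat.card {ψ : Quotient (orbitRel (Subgroup.zpowers g) P) → α //
          ∀ a b, Relation.Map r (Quotient.mk _) (Quotient.mk _) a b → s (ψ a) (ψ b)} : K) := by
  have : CovariantClass G P (· • ·) r := ⟨fun g p q => hact g p q⟩
  have : Finite (r →r s) := .of_equiv _ subtypeEquivRelHom
  simp only [Nat.card_congr quotEquivOrbitRelQuotientRelHom, Nat.card_congr subtypeEquivRelHom,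
    card_orbits_eq_inv_mul_sum_card_fixedBy hG, Nat.card_congr (fixedByRelHomEquiv _)]

theorem quotPosetRel_eq_map {P G : Type*} [PartialOrder P] [Group G] [MulAction G P] (g : G) :
    quotPosetRel (P := P) g = Relation.Map (· < ·) (Quotient.mk (orbitRel (Subgroup.zpowers g) P))
      (Quotient.mk (orbitRel (Subgroup.zpowers g) P)) := by
  ext a b
  exact exists₂_congr fun x y => and_assoc.symm.trans and_comm

/-- Let `P` be a finite poset and `G` a finite group acting on `P` by
automorphisms.  For all `n ≥ 1`, the number of `G`-orbits of order preserving maps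
`P → [n]` (where `(g • φ)(x) = φ(g⁻¹ • x)`) satisfies
`Ω_{P,G}(n) = |Hom(P,[n])/G| = (1/|G|) · Σ_{g ∈ G} Ω_{P_g}(n)`,
where `Ω_{P_g}(n)` is the number of order preserving maps from the quotient poset `P_g`
to `[n]`. -/
theorem stmt_3 {P G : Type*} [PartialOrder P] [Fintype P] [Group G] [Fintype G]
    [MulAction G P] (hact : ∀ (g : G) (p q : P), p < q → g • p < g • q)
    (n : ℕ) (hn : 1 ≤ n) :
    (Nat.card (Quot (fun φ ψ : {φ : P → Fin n // ∀ p q : P, p < q → φ p ≤ φ q} =>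
        ∃ g : G, ∀ x : P, ψ.1 x = φ.1 (g⁻¹ • x))) : ℚ) =
      (Fintype.card G : ℚ)⁻¹ * ∑ g : G,
        (Nat.card {ψ : Quotient (MulAction.orbitRel (Subgroup.zpowers g) P) → Fin n //
          ∀ a b, quotPosetRel (P := P) g a b → ψ a ≤ ψ b} : ℚ) := by
  simpa only [quotPosetRel_eq_map] using
    stmt_3_general hact (Nat.cast_ne_zero.2 Fintype.card_ne_zero)
end

section
/- Let P be a finite poset and G a finite group acting on P by automorphisms. Then for all n ≥ 1, the number of G-orbits of strictly order preserving maps P → [n] satisfies Ω°_{P,G}(n) = |Hom°(P,[n])/G| = (1/|G|) · Σ_{g∈G} Ω°_{P_g}(n), where the sum ranges over all g ∈ G and P_g is the quotient poset of P by ⟨g⟩. -/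
/-!
By Burnside's lemma, the number of orbits is the average over `g` of the number of order preserving
maps fixed by `g`. A map `φ` is fixed by `g` exactly when it is constant on the `⟨g⟩`-orbits, that
is, when it factors (uniquely) through `P → P_g`; since the relation on `P_g` is the image of the
one on `P`, the factored map is order preserving if and only if `φ` is.
-/

section

open MulAction

theorem natCast_card_orbits_eq_inv_mul_sum_card_fixedBy (K G X : Type*) [DivisionRing K]
    [CharZero K] [Group G] [Fintype G] [MulAction G X] [Finite X] :
    (Nat.card (orbitRel.Quotient G X) : K) =
      (Fintype.card G : K)⁻¹ * ∑ g : G, (Nat.card (fixedBy X g) : K) := by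
  classical
  have := Fintype.ofFinite X
  have burnside : Nat.card (orbitRel.Quotient G X) * Fintype.card G =
      ∑ g : G, Nat.card (fixedBy X g) := by
    simpa only [Nat.card_eq_fintype_card] using
      (sum_card_fixedBy_eq_card_orbits_mul_card_group G X).symm
  have card_ne_zero : (Fintype.card G : K) ≠ 0 := Nat.cast_ne_zero.mpr Fintype.card_ne_zero
  rw [eq_inv_mul_iff_mul_eq₀ card_ne_zero, ← Nat.cast_commute]
  exact_mod_cast burnside

theorem card_quot_exists_eq_smul (G X : Type*) [Group G] [MulAction G X] :
    Nat.card (Quot fun a b : X => ∃ g : G, b = g • a) = Nat.card (orbitRel.Quotient G X) :=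
  Nat.card_congr <| Quot.congrRight fun a b => by
    change _ ↔ a ∈ orbit G b
    rw [mem_orbit_symm]
    exact exists_congr fun _ => eq_comm

attribute [local instance] arrowAction

variable {P α G : Type*} [Group G] [MulAction G P]

theorem le_stabilizer_iff_orbitRel_le_ker (H : Subgroup G) (φ : P → α) :
    H ≤ stabilizer G φ ↔ orbitRel H P ≤ Setoid.ker φ := by
  constructor
  · rintro fixed _ y ⟨h, rfl⟩
    calc φ (h.1 • y) = (h.1 • φ) (h.1 • y) := congrFun (fixed h.2).symm _
      _ = φ y := congrArg φ (inv_smul_smul h.1 y)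
  · intro const h mem
    exact funext fun x => const ⟨⟨h⁻¹, inv_mem mem⟩, rfl⟩

theorem mem_fixedBy_iff_orbitRel_zpowers_le_ker (g : G) (φ : P → α) :
    φ ∈ fixedBy (P → α) g ↔ orbitRel (Subgroup.zpowers g) P ≤ Setoid.ker φ := by
  rw [← le_stabilizer_iff_orbitRel_le_ker, Subgroup.zpowers_le]
  rfl

variable {r : P → P → Prop}

/-- The maps `P → α` carrying `r` to `s`, as a subset of `P → α` stable under the action
`(g • φ) x = φ (g⁻¹ • x)`. For `r` and `s` strict orders these are the strictly order preserving
maps. -/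
def relPreservingMaps (hr : ∀ (g : G) (p q : P), r p q → r (g • p) (g • q)) (s : α → α → Prop) :
    SubMulAction G (P → α) where
  carrier := {φ | ∀ p q, r p q → s (φ p) (φ q)}
  smul_mem' g _ hφ p q hpq := hφ _ _ (hr g⁻¹ p q hpq)

/-- The factorization through the set of `⟨g⟩`-orbits of the relation preserving maps fixed by
`g`. The relation on orbits is the image of `r`, as for the quotient poset `P_g`. -/
def fixedByRelPreservingMapsEquiv (hr : ∀ (g : G) (p q : P), r p q → r (g • p) (g • q))
    (s : α → α → Prop) (g : G) :
    fixedBy (relPreservingMaps hr s) g ≃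
      {ψ : orbitRel.Quotient (Subgroup.zpowers g) P → α //
        ∀ a b, Relation.Map r (Quotient.mk _) (Quotient.mk _) a b → s (ψ a) (ψ b)} where
  toFun φ :=
    ⟨Quotient.lift φ.1.1 fun _ _ hxy =>
        (mem_fixedBy_iff_orbitRel_zpowers_le_ker g φ.1.1).mp (congrArg Subtype.val φ.2) hxy, by
      rintro _ _ ⟨x, y, hxy, rfl, rfl⟩
      exact φ.1.2 x y hxy⟩
  invFun ψ :=
    ⟨⟨fun x => ψ.1 (Quotient.mk _ x), fun x y hxy => ψ.2 _ _ ⟨x, y, hxy, rfl, rfl⟩⟩,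
      Subtype.ext <| (mem_fixedBy_iff_orbitRel_zpowers_le_ker g _).mpr fun _ _ hxy =>
        congrArg ψ.1 (Quotient.sound hxy)⟩
  left_inv _ := rfl
  right_inv _ := Subtype.ext <| funext <| Quotient.ind fun _ => rfl

theorem stmt_4_general [Fintype G] (hr : ∀ (g : G) (p q : P), r p q → r (g • p) (g • q))
    (s : α → α → Prop) [Finite {φ : P → α // ∀ p q, r p q → s (φ p) (φ q)}] :
    (Nat.card (Quot fun φ ψ : {φ : P → α // ∀ p q, r p q → s (φ p) (φ q)} =>
        ∃ g : G, ∀ x, ψ.1 x = φ.1 (g⁻¹ • x)) : ℚ) =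
      (Fintype.card G : ℚ)⁻¹ * ∑ g : G,
        (Nat.card {ψ : orbitRel.Quotient (Subgroup.zpowers g) P → α //
          ∀ a b, Relation.Map r (Quotient.mk _) (Quotient.mk _) a b → s (ψ a) (ψ b)} : ℚ) := by
  have : Finite (relPreservingMaps hr s) := ‹_›
  have orbit_count :
      Nat.card (Quot fun φ ψ : {φ : P → α // ∀ p q, r p q → s (φ p) (φ q)} =>
        ∃ g : G, ∀ x, ψ.1 x = φ.1 (g⁻¹ • x)) =
      Nat.card (orbitRel.Quotient G (relPreservingMaps hr s)) := by
    rw [← card_quot_exists_eq_smul]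
    exact Nat.card_congr <| Quot.congrRight fun φ ψ => exists_congr fun g =>
      ⟨fun h => Subtype.ext (funext h), fun h => congrFun (congrArg Subtype.val h)⟩
  rw [orbit_count, natCast_card_orbits_eq_inv_mul_sum_card_fixedBy]
  simp only [Nat.card_congr (fixedByRelPreservingMapsEquiv hr s _)]

end

theorem quotPosetRel_eq_relationMap {P G : Type*} [PartialOrder P] [Group G] [MulAction G P]
    (g : G) :
    quotPosetRel (P := P) g = Relation.Map (· < ·) (Quotient.mk _) (Quotient.mk _) := by
  ext a b
  exact exists_congr fun _ => exists_congr fun _ => and_rotate.symm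

/-- Let `P` be a finite poset and `G` a finite group acting on `P` by
automorphisms.  For all `n ≥ 1`, the number of `G`-orbits of strictly order preserving
maps `P → [n]` (where `(g • φ)(x) = φ(g⁻¹ • x)`) satisfies
`Ω°_{P,G}(n) = |Hom°(P,[n])/G| = (1/|G|) · Σ_{g ∈ G} Ω°_{P_g}(n)`,
where `Ω°_{P_g}(n)` is the number of strictly order preserving maps from the quotient
poset `P_g` to `[n]`. -/
theorem stmt_4 {P G : Type*} [PartialOrder P] [Fintype P] [Group G] [Fintype G]
    [MulAction G P] (hact : ∀ (g : G) (p q : P), p < q → g • p < g • q)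
    (n : ℕ) (hn : 1 ≤ n) :
    (Nat.card (Quot (fun φ ψ : {φ : P → Fin n // ∀ p q : P, p < q → φ p < φ q} =>
        ∃ g : G, ∀ x : P, ψ.1 x = φ.1 (g⁻¹ • x))) : ℚ) =
      (Fintype.card G : ℚ)⁻¹ * ∑ g : G,
        (Nat.card {ψ : Quotient (MulAction.orbitRel (Subgroup.zpowers g) P) → Fin n //
          ∀ a b, quotPosetRel (P := P) g a b → ψ a < ψ b} : ℚ) := by
  simpa only [quotPosetRel_eq_relationMap] using stmt_4_general hact (· < · : Fin n → Fin n → Prop)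
end

section
/- Let P be a finite poset and G a finite group acting on P by automorphisms. Then there exists a polynomial p of degree exactly |P| (with rational coefficients) such that for all integers n ≥ 1, p(n) equals the number of G-orbits of order preserving maps P → [n], i.e., p(n) = |Hom(P,[n])/G|. -/
/-!
Sorting order preserving maps `P → [n]` by their image shows that the number of orbits is
`∑ k, n.choose k * s k`, where `s k` is the number of orbits of order preserving surjections
`P → [k]`: the group action does not change the image of a map, and the surjections onto a
`k`-element chain do not depend on the chain. Since `s k = 0` for `k > |P|`, while the linear
extensions of `P` give `s |P| ≠ 0`, this is a polynomial in `n` of degree `|P|`.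
-/

open Polynomial

section BinomialPolynomials

variable (K : Type*) [Field K] [CharZero K]

/-- The sequence of binomial polynomials `X (X - 1) ⋯ (X - k + 1) / k!`, whose values at natural
numbers `n` are the binomial coefficients `n.choose k`. -/
noncomputable def binomialSequence : Polynomial.Sequence K where
  elems' k := C (k.factorial : K)⁻¹ * descPochhammer K k
  degree_eq' k := by
    have factorial_ne_zero : (k.factorial : K) ≠ 0 := Nat.cast_ne_zero.mpr k.factorial_ne_zero
    rw [degree_C_mul (inv_ne_zero factorial_ne_zero),
      degree_eq_natDegree (monic_descPochhammer K k).ne_zero, descPochhammer_natDegree]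

theorem binomialSequence_eval_natCast (k n : ℕ) :
    (binomialSequence K k).eval (n : K) = n.choose k := by
  have factorial_ne_zero : (k.factorial : K) ≠ 0 := Nat.cast_ne_zero.mpr k.factorial_ne_zero
  simp only [binomialSequence, eval_mul, eval_C, descPochhammer_eval_eq_descFactorial,
    Nat.descFactorial_eq_factorial_mul_choose, Nat.cast_mul]
  exact inv_mul_cancel_left₀ factorial_ne_zero _

theorem degree_sum_range_succ_C_mul_sequence {R : Type*} [Semiring R] [NoZeroDivisors R]
    (S : Polynomial.Sequence R) {c : ℕ → R} {d : ℕ} (hd : c d ≠ 0) :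
    (∑ k ∈ Finset.range (d + 1), C (c k) * S k).degree = d := by
  have degree_top : (C (c d) * S d).degree = d := by rw [degree_C_mul hd, S.degree_eq]
  have degree_lower : (∑ k ∈ Finset.range d, C (c k) * S k).degree < d := by
    rw [← mem_degreeLT]
    refine Submodule.sum_mem _ fun k hk => ?_
    rw [← smul_eq_C_mul]
    refine Submodule.smul_mem _ _ (mem_degreeLT.mpr ?_)
    exact (S.degree_eq k).trans_lt (Nat.cast_lt.mpr (Finset.mem_range.mp hk))
  rw [Finset.sum_range_succ, degree_add_eq_right_of_degree_lt (degree_top ▸ degree_lower),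
    degree_top]

variable {K}

theorem exists_degree_eq_and_eval_natCast_eq_sum_choose_mul {c : ℕ → K} {d : ℕ} (hd : c d ≠ 0) :
    ∃ p : K[X], p.degree = d ∧
      ∀ n : ℕ, p.eval (n : K) = ∑ k ∈ Finset.range (d + 1), n.choose k * c k := by
  refine ⟨_, degree_sum_range_succ_C_mul_sequence (binomialSequence K) hd, fun n => ?_⟩
  simp only [eval_finsetSum, eval_mul, eval_C, binomialSequence_eval_natCast, mul_comm]

end BinomialPolynomials

theorem sum_range_choose_mul_eq_of_forall_lt {R : Type*} [NonAssocSemiring R] {c : ℕ → R} {d : ℕ}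
    (hc : ∀ k, d < k → c k = 0) (n : ℕ) :
    ∑ k ∈ Finset.range (n + 1), n.choose k * c k =
      ∑ k ∈ Finset.range (d + 1), n.choose k * c k := by
  rcases le_total n d with hnd | hdn
  · refine (Finset.eventually_constant_sum (fun k hk => ?_) (Nat.succ_le_succ hnd)).symm
    rw [Nat.choose_eq_zero_of_lt hk, Nat.cast_zero, zero_mul]
  · refine Finset.eventually_constant_sum (fun k hk => ?_) (Nat.succ_le_succ hdn)
    rw [hc k hk, mul_zero]

theorem sum_set_apply_natCard {M α : Type*} [AddCommMonoid M] [Fintype α] (f : ℕ → M) :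
    ∑ S : Set α, f (Nat.card S) =
      ∑ k ∈ Finset.range (Fintype.card α + 1), (Fintype.card α).choose k • f k := by
  rw [← Fintype.finsetEquivSet.sum_comp]
  simpa using Finset.sum_powerset_apply_card f (x := (Finset.univ : Finset α))

section Orbits

variable {P : Type*} (G : Type*) {α β : Type*} [Group G] [MulAction G P]

attribute [local instance] arrowAction in
/-- The relation of lying in one orbit of the action `(g • φ) x = φ (g⁻¹ • x)` of `G` on `P → α`,
restricted to the maps with property `p`. The property need not be invariant under `G`. -/
def arrowOrbitRel (p : (P → α) → Prop) : Setoid (Subtype p) :=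
  (MulAction.orbitRel G (P → α)).comap Subtype.val

theorem arrowOrbitRel_iff {p : (P → α) → Prop} {φ ψ : Subtype p} :
    arrowOrbitRel G p φ ψ ↔ ∃ g : G, ∀ x, ψ.1 x = φ.1 (g⁻¹ • x) := by
  rw [Setoid.comm']
  exact exists_congr fun g => eq_comm.trans funext_iff

variable {G} in
theorem arrowOrbitRel_iff_of_injective {p : (P → α) → Prop} {q : (P → β) → Prop}
    {φ ψ : Subtype p} {φ' ψ' : Subtype q} {f : α → β} (hf : f.Injective)
    (hφ : φ'.1 = f ∘ φ.1) (hψ : ψ'.1 = f ∘ ψ.1) :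
    arrowOrbitRel G q φ' ψ' ↔ arrowOrbitRel G p φ ψ := by
  simp only [arrowOrbitRel_iff, hφ, hψ, Function.comp_apply, hf.eq_iff]

variable {G} in
theorem range_eq_of_arrowOrbitRel {p : (P → α) → Prop} {φ ψ : Subtype p}
    (h : arrowOrbitRel G p φ ψ) : Set.range φ.1 = Set.range ψ.1 := by
  obtain ⟨g, hg⟩ := (arrowOrbitRel_iff G).mp h
  rw [show ψ.1 = φ.1 ∘ (g⁻¹ • ·) from funext hg, (MulAction.surjective g⁻¹).range_comp]

variable (P α) [Preorder P] [Preorder α] [Preorder β]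

/-- The classes of monotone maps `P → α` modulo the action of `G` on `P`. -/
abbrev MonotoneOrbits : Type _ :=
  Quotient (arrowOrbitRel G fun φ : P → α => Monotone φ)

/-- The classes of monotone surjections `P → α` modulo the action of `G` on `P`. -/
abbrev MonotoneSurjOrbits : Type _ :=
  Quotient (arrowOrbitRel G fun φ : P → α => Monotone φ ∧ φ.Surjective)

variable {P α}

/-- Composition with the inclusion of `S` in `α`, identifying the orbits of monotone surjections
onto `S` with the orbits of monotone maps of image `S`. -/
def MonotoneSurjOrbits.toMonotoneOrbits (S : Set α) :
    MonotoneSurjOrbits P G S → MonotoneOrbits P G α :=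
  Quotient.map (fun φ => ⟨Subtype.val ∘ φ.1, fun _ _ hxy => φ.2.1 hxy⟩) fun _ _ =>
    (arrowOrbitRel_iff_of_injective Subtype.val_injective rfl rfl).mpr

theorem MonotoneSurjOrbits.bijective_sigma_toMonotoneOrbits :
    Function.Bijective fun o : Σ S : Set α, MonotoneSurjOrbits P G S =>
      toMonotoneOrbits G o.1 o.2 := by
  constructor
  · rintro ⟨S, ⟨φ⟩⟩ ⟨T, ⟨ψ⟩⟩ h
    have rel := Quotient.exact h
    obtain rfl : S = T := by
      simpa only [φ.2.2.range_comp, ψ.2.2.range_comp, Subtype.range_coe]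
        using range_eq_of_arrowOrbitRel rel
    exact congrArg (Sigma.mk S) <| Quotient.sound <|
      (arrowOrbitRel_iff_of_injective Subtype.val_injective rfl rfl).mp rel
  · rintro ⟨φ⟩
    exact ⟨⟨Set.range φ.1, ⟦⟨Set.rangeFactorization φ.1, fun _ _ hxy => φ.2 hxy,
      Set.rangeFactorization_surjective⟩⟧⟩, rfl⟩

/-- An order isomorphism of codomains induces a bijection on orbits of monotone surjections. -/
def MonotoneSurjOrbits.congrRight (e : α ≃o β) :
    MonotoneSurjOrbits P G α ≃ MonotoneSurjOrbits P G β :=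
  Quotient.congr
    (((Equiv.refl P).arrowCongr e.toEquiv).subtypeEquiv fun φ =>
      and_congr (forall₃_congr fun _ _ _ => e.le_iff_le.symm) (EquivLike.comp_surjective φ e).symm)
    fun _ _ => (arrowOrbitRel_iff_of_injective e.injective rfl rfl).symm

theorem card_monotoneSurjOrbits_eq_zero [Finite P] (h : Nat.card P < Nat.card α) :
    Nat.card (MonotoneSurjOrbits P G α) = 0 := by
  have : IsEmpty (MonotoneSurjOrbits P G α) :=
    ⟨by rintro ⟨φ⟩; exact (Nat.card_le_card_of_surjective φ.1 φ.2.2).not_gt h⟩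
  exact Nat.card_of_isEmpty

end Orbits

theorem card_monotoneOrbits_eq_sum_choose_mul {P α : Type*} (G : Type*) [Group G] [MulAction G P]
    [Preorder P] [Finite P] [LinearOrder α] [Fintype α] :
    Nat.card (MonotoneOrbits P G α) = ∑ k ∈ Finset.range (Fintype.card α + 1),
      (Fintype.card α).choose k * Nat.card (MonotoneSurjOrbits P G (Fin k)) := by
  have card_surj_onto (S : Set α) : Nat.card (MonotoneSurjOrbits P G S) =
      Nat.card (MonotoneSurjOrbits P G (Fin (Nat.card S))) := by
    have := Fintype.ofFinite S
    exact Nat.card_congr <| MonotoneSurjOrbits.congrRight G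
      (Fintype.orderIsoFinOfCardEq S Fintype.card_eq_nat_card).symm
  calc Nat.card (MonotoneOrbits P G α)
      = ∑ S : Set α, Nat.card (MonotoneSurjOrbits P G S) := by
        rw [← Nat.card_eq_of_bijective _ (MonotoneSurjOrbits.bijective_sigma_toMonotoneOrbits G),
          Nat.card_sigma]
    _ = ∑ S : Set α, Nat.card (MonotoneSurjOrbits P G (Fin (Nat.card S))) :=
        Finset.sum_congr rfl fun S _ => card_surj_onto S
    _ = _ := sum_set_apply_natCard fun k => Nat.card (MonotoneSurjOrbits P G (Fin k))

theorem exists_monotone_bijective_fin_card (P : Type*) [PartialOrder P] [Fintype P] :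
    ∃ φ : P → Fin (Fintype.card P), Monotone φ ∧ φ.Bijective := by
  let : Fintype (LinearExtension P) := ‹Fintype P›
  let e : LinearExtension P ≃o Fin (Fintype.card P) :=
    (Fintype.orderIsoFinOfCardEq (LinearExtension P) rfl).symm
  exact ⟨e ∘ toLinearExtension, e.monotone.comp toLinearExtension.monotone, e.bijective⟩

theorem card_monotoneSurjOrbits_fin_card_pos (P G : Type*) [Group G] [MulAction G P]
    [PartialOrder P] [Fintype P] :
    0 < Nat.card (MonotoneSurjOrbits P G (Fin (Fintype.card P))) := by
  obtain ⟨φ, hmono, hbij⟩ := exists_monotone_bijective_fin_card P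
  have : Nonempty (MonotoneSurjOrbits P G (Fin (Fintype.card P))) := ⟨⟦⟨φ, hmono, hbij.surjective⟩⟧⟩
  exact Nat.card_pos

theorem card_quot_orderPreserving_eq_card_monotoneOrbits (P G α : Type*) [Group G] [MulAction G P]
    [PartialOrder P] [Preorder α] :
    Nat.card (Quot (fun φ ψ : {φ : P → α // ∀ p q : P, p < q → φ p ≤ φ q} =>
      ∃ g : G, ∀ x : P, ψ.1 x = φ.1 (g⁻¹ • x))) = Nat.card (MonotoneOrbits P G α) :=
  Nat.card_congr <| Quot.congr
    (Equiv.subtypeEquivRight fun _ => monotone_iff_forall_lt.symm)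
    fun _ _ => (arrowOrbitRel_iff G).symm

theorem stmt_5_general (P G : Type*) [PartialOrder P] [Fintype P] [Group G] [MulAction G P] :
    ∃ p : ℚ[X], p.degree = (Fintype.card P : WithBot ℕ) ∧
      ∀ n : ℕ, p.eval (n : ℚ) =
        Nat.card (Quot (fun φ ψ : {φ : P → Fin n // ∀ p q : P, p < q → φ p ≤ φ q} =>
          ∃ g : G, ∀ x : P, ψ.1 x = φ.1 (g⁻¹ • x))) := by
  let s (k : ℕ) : ℕ := Nat.card (MonotoneSurjOrbits P G (Fin k))
  have s_eq_zero (k : ℕ) (hk : Fintype.card P < k) : s k = 0 :=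
    card_monotoneSurjOrbits_eq_zero G (by simpa using hk)
  have s_card_ne_zero : (s (Fintype.card P) : ℚ) ≠ 0 :=
    Nat.cast_ne_zero.mpr (card_monotoneSurjOrbits_fin_card_pos P G).ne'
  obtain ⟨p, hdegree, heval⟩ :=
    exists_degree_eq_and_eval_natCast_eq_sum_choose_mul (c := fun k => (s k : ℚ)) s_card_ne_zero
  refine ⟨p, hdegree, fun n => ?_⟩
  rw [heval, card_quot_orderPreserving_eq_card_monotoneOrbits,
    card_monotoneOrbits_eq_sum_choose_mul, Fintype.card_fin]
  push_cast
  exact (sum_range_choose_mul_eq_of_forall_lt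
    (fun k hk => Nat.cast_eq_zero.mpr (s_eq_zero k hk)) n).symm

/-- Let `P` be a finite poset and `G` a finite group acting on `P` by
automorphisms.  There exists a polynomial `p` with rational coefficients of degree
exactly `|P|` such that for all integers `n ≥ 1`, `p(n)` equals the number of
`G`-orbits of order preserving maps `P → [n]` (the action being `(g • φ)(x) = φ(g⁻¹ • x)`). -/
theorem stmt_5 {P G : Type*} [PartialOrder P] [Fintype P] [Group G] [Fintype G]
    [MulAction G P] (hact : ∀ (g : G) (p q : P), p < q → g • p < g • q) :
    ∃ p : Polynomial ℚ, p.degree = (Fintype.card P : WithBot ℕ) ∧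
      ∀ n : ℕ, 1 ≤ n →
        p.eval (n : ℚ) =
          Nat.card (Quot (fun φ ψ : {φ : P → Fin n // ∀ p q : P, p < q → φ p ≤ φ q} =>
            ∃ g : G, ∀ x : P, ψ.1 x = φ.1 (g⁻¹ • x))) := by
  obtain ⟨p, hdegree, heval⟩ := stmt_5_general P G
  exact ⟨p, hdegree, fun n _ => heval n⟩
end

section
/- Let P be a finite poset and G a finite group acting on P by automorphisms. Then there exists a polynomial p of degree exactly |P| (with rational coefficients) such that for all integers n ≥ 1, p(n) equals the number of G-orbits of strictly order preserving maps P → [n], i.e., p(n) = |Hom°(P,[n])/G|. -/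
/-!
A strict map `P → [n]` is the same as its range `S ⊆ [n]` together with a strict surjection
`P → [|S|]`, and `G` acts on the surjection only. Hence the number of orbits is
`∑ k ≤ |P|, n.choose k * aₖ`, where `aₖ` counts the orbits of strict surjections `P → [k]`. Each
`n.choose k` is a polynomial in `n` of degree `k`, and the top coefficient `a_{|P|}` is nonzero
because `P` has a linear extension.
-/

open Finset Function Polynomial

section BinomialSums

variable {K : Type*} [Field K] [CharZero K]

theorem exists_polynomial_degree_eq_eval_eq_sum_choose_mul (a : ℕ → K) {d : ℕ} (hd : a d ≠ 0) :
    ∃ p : K[X], p.degree = d ∧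
      ∀ n : ℕ, p.eval (n : K) = ∑ k ∈ range (d + 1), (n.choose k : K) * a k := by
  let q (k : ℕ) : K[X] := (a k / k.factorial) • descPochhammer K k
  have degree_descPochhammer (k : ℕ) : (descPochhammer K k).degree = k := by
    rw [degree_eq_natDegree (monic_descPochhammer K k).ne_zero, descPochhammer_natDegree]
  have degree_q_le (k : ℕ) : (q k).degree ≤ k :=
    (degree_smul_le _ _).trans (degree_descPochhammer k).le
  have degree_q_top : (q d).degree = d := by
    have : a d / d.factorial ≠ 0 := div_ne_zero hd (Nat.cast_ne_zero.2 d.factorial_ne_zero)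
    simp only [q, smul_eq_C_mul, degree_C_mul this, degree_descPochhammer]
  refine ⟨∑ k ∈ range (d + 1), q k, ?_, fun n ↦ ?_⟩
  · have degree_lower : (∑ k ∈ range d, q k).degree < (q d).degree := by
      rw [degree_q_top]
      refine (degree_sum_le _ _).trans_lt ((Finset.sup_lt_iff (WithBot.bot_lt_coe d)).2 ?_)
      exact fun k hk ↦ (degree_q_le k).trans_lt (Nat.cast_lt.2 (mem_range.1 hk))
    rw [sum_range_succ, degree_add_eq_right_of_degree_lt degree_lower, degree_q_top]
  · rw [eval_finsetSum]
    refine sum_congr rfl fun k _ ↦ ?_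
    rw [eval_smul, smul_eq_mul, Nat.cast_choose_eq_descPochhammer_div]
    ring

end BinomialSums

theorem sum_range_choose_mul_eq_of_eq_zero {R : Type*} [NonAssocSemiring R] {a : ℕ → R} {d : ℕ}
    (ha : ∀ k, d < k → a k = 0) (n : ℕ) :
    ∑ k ∈ range (n + 1), (n.choose k : R) * a k =
      ∑ k ∈ range (d + 1), (n.choose k : R) * a k := by
  have vanish_above_n : ∀ k ≥ n + 1, (n.choose k : R) * a k = 0 := fun k hk ↦ by
    rw [Nat.choose_eq_zero_of_lt hk, Nat.cast_zero, zero_mul]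
  have vanish_above_d : ∀ k ≥ d + 1, (n.choose k : R) * a k = 0 := fun k hk ↦ by
    rw [ha k hk, mul_zero]
  rw [← eventually_constant_sum vanish_above_n (le_max_left (n + 1) (d + 1)),
    ← eventually_constant_sum vanish_above_d (le_max_right (n + 1) (d + 1))]

theorem exists_bijective_fin_of_isStrictOrder {P : Type*} [Fintype P] (r : P → P → Prop)
    [IsStrictOrder P r] :
    ∃ φ : P → Fin (Fintype.card P), (∀ x y, r x y → φ x < φ y) ∧ Bijective φ := by
  let _ : PartialOrder P := partialOrderOfSO r
  let _ : Fintype (LinearExtension P) := inferInstanceAs (Fintype P)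
  let extension : P →o LinearExtension P := toLinearExtension
  have bijective_extension : Bijective extension := bijective_id
  have strictMono_extension : StrictMono extension :=
    extension.monotone.strictMono_of_injective bijective_extension.injective
  let enumeration : LinearExtension P ≃o Fin (Fintype.card P) :=
    (Fintype.orderIsoFinOfCardEq _ rfl).symm
  exact ⟨enumeration ∘ extension, enumeration.strictMono.comp strictMono_extension,
    enumeration.bijective.comp bijective_extension⟩

section MapOrbits

variable {P α β : Type*} (G : Type*) [Group G] [MulAction G P]

/-- The relation on a set `A` of maps out of a `G`-set `P` of lying in the same orbit of the action
`(g • φ) x = φ (g⁻¹ • x)` on all maps. The set `A` need not be stable under `G`. -/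
def mapOrbitRel (A : Set (P → α)) : Setoid A where
  r φ ψ := ∃ g : G, ∀ x, ψ.1 x = φ.1 (g⁻¹ • x)
  iseqv :=
    { refl := fun φ ↦ ⟨1, fun x ↦ by rw [inv_one, one_smul]⟩
      symm := by
        rintro φ ψ ⟨g, hg⟩
        exact ⟨g⁻¹, fun x ↦ by rw [hg, inv_inv, inv_smul_smul]⟩
      trans := by
        rintro φ ψ χ ⟨g, hg⟩ ⟨h, hh⟩
        exact ⟨h * g, fun x ↦ by rw [hh, hg, mul_inv_rev, mul_smul]⟩ }

/-- The set of orbits of maps in `A` under the action of `G` on their domain. -/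
abbrev MapOrbits (A : Set (P → α)) : Type _ :=
  Quotient (mapOrbitRel G A)

variable {G}

theorem range_eq_of_mapOrbitRel {A : Set (P → α)} {φ ψ : A} (h : mapOrbitRel G A φ ψ) :
    Set.range φ.1 = Set.range ψ.1 := by
  obtain ⟨g, hg⟩ := h
  have : ψ.1 = φ.1 ∘ MulAction.toPerm g⁻¹ := funext hg
  rw [this, EquivLike.range_comp]

theorem mapOrbitRel_iff_of_injective_comp {A : Set (P → α)} {B : Set (P → β)} {e : α → β}
    (he : Injective e) {φ ψ : A} {φ' ψ' : B} (hφ : φ'.1 = e ∘ φ.1) (hψ : ψ'.1 = e ∘ ψ.1) :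
    mapOrbitRel G B φ' ψ' ↔ mapOrbitRel G A φ ψ := by
  refine exists_congr fun g ↦ forall_congr' fun x ↦ ?_
  rw [hφ, hψ]
  exact he.eq_iff

end MapOrbits

section StrictMaps

variable {P α : Type*} [Preorder P]

variable (P α) in
/-- The set `Hom°(P, α)` of strictly order preserving maps `P → α`. -/
def strictMaps [Preorder α] : Set (P → α) :=
  {φ | StrictMono φ}

variable (P α) in
/-- The set of surjective strictly order preserving maps `P → α`. -/
def strictSurjections [Preorder α] : Set (P → α) :=
  {φ | StrictMono φ ∧ Surjective φ}

variable [LinearOrder α]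

/-- The strict map `P → α` with range `S` obtained from a strict surjection onto `Fin #S` by
relabelling its values along the increasing enumeration of `S`. -/
def relabel (S : Finset α) (φ : strictSurjections P (Fin #S)) : strictMaps P α :=
  ⟨S.orderEmbOfFin rfl ∘ φ.1, (S.orderEmbOfFin rfl).strictMono.comp φ.2.1⟩

theorem range_relabel (S : Finset α) (φ : strictSurjections P (Fin #S)) :
    Set.range (relabel S φ).1 = S := by
  rw [relabel, φ.2.2.range_comp, range_orderEmbOfFin]

theorem exists_relabel_eq {φ : strictMaps P α} {S : Finset α} (hS : Set.range φ.1 = S) :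
    ∃ ψ, relabel S ψ = φ := by
  have mem_S (x : P) : φ.1 x ∈ S := mem_coe.1 (hS ▸ Set.mem_range_self x)
  let e : Fin #S ≃o S := S.orderIsoOfFin rfl
  let φS : P → S := fun x ↦ ⟨φ.1 x, mem_S x⟩
  have surjective_φS : Surjective φS := fun ⟨y, hy⟩ ↦ by
    obtain ⟨x, rfl⟩ : y ∈ Set.range φ.1 := hS ▸ hy
    exact ⟨x, rfl⟩
  refine ⟨⟨e.symm ∘ φS, e.symm.strictMono.comp fun _ _ h ↦ φ.2 h,
    e.symm.surjective.comp surjective_φS⟩, Subtype.ext (funext fun x ↦ ?_)⟩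
  exact congrArg Subtype.val (e.apply_symm_apply (φS x))

variable (G : Type*) [Group G] [MulAction G P]

theorem mapOrbitRel_relabel_iff {S : Finset α} {φ ψ : strictSurjections P (Fin #S)} :
    mapOrbitRel G _ (relabel S φ) (relabel S ψ) ↔ mapOrbitRel G _ φ ψ :=
  mapOrbitRel_iff_of_injective_comp (S.orderEmbOfFin rfl).injective rfl rfl

variable (P α) in
/-- The map sending a finite subset `S` of `α` and an orbit of strict surjections onto `Fin #S` to
the orbit of strict maps with range `S` obtained by relabelling. -/
def relabelOrbit :
    (Σ S : Finset α, MapOrbits G (strictSurjections P (Fin #S))) → MapOrbits G (strictMaps P α) :=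
  fun a ↦ Quotient.map (relabel a.1) (fun _ _ ↦ (mapOrbitRel_relabel_iff G).2) a.2

theorem relabelOrbit_injective : Injective (relabelOrbit P α G) := by
  rintro ⟨S, ⟨φ⟩⟩ ⟨T, ⟨ψ⟩⟩ h
  have related : mapOrbitRel G _ (relabel S φ) (relabel T ψ) := Quotient.exact h
  obtain rfl : S = T := by
    rw [← coe_inj, ← range_relabel S φ, ← range_relabel T ψ]
    exact range_eq_of_mapOrbitRel related
  exact congrArg (Sigma.mk S) (Quotient.sound ((mapOrbitRel_relabel_iff G).1 related))

theorem relabelOrbit_surjective [Finite P] : Surjective (relabelOrbit P α G) := by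
  rintro ⟨φ⟩
  obtain ⟨ψ, hψ⟩ := exists_relabel_eq (Set.finite_range φ.1).coe_toFinset.symm
  exact ⟨⟨_, Quotient.mk _ ψ⟩, congrArg (Quotient.mk _) hψ⟩

variable (P α) in
theorem card_mapOrbits_strictMaps_eq_sum_choose_mul [Finite P] [Fintype α] :
    Nat.card (MapOrbits G (strictMaps P α)) =
      ∑ k ∈ range (Fintype.card α + 1),
        (Fintype.card α).choose k * Nat.card (MapOrbits G (strictSurjections P (Fin k))) := by
  have card_eq_sum_range : Nat.card (MapOrbits G (strictMaps P α)) =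
      ∑ S : Finset α, Nat.card (MapOrbits G (strictSurjections P (Fin #S))) := by
    rw [← Nat.card_sigma, Nat.card_eq_of_bijective (relabelOrbit P α G)
      ⟨relabelOrbit_injective G, relabelOrbit_surjective G⟩]
  rw [card_eq_sum_range, ← powerset_univ, sum_powerset_apply_card
    fun k ↦ Nat.card (MapOrbits G (strictSurjections P (Fin k)))]
  simp only [card_univ, smul_eq_mul]

theorem card_mapOrbits_strictSurjections_eq_zero [Fintype P] {k : ℕ} (hk : Fintype.card P < k) :
    Nat.card (MapOrbits G (strictSurjections P (Fin k))) = 0 := by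
  have : IsEmpty (strictSurjections P (Fin k)) := ⟨fun φ ↦
    hk.not_ge (by simpa only [Fintype.card_fin] using Fintype.card_le_of_surjective _ φ.2.2)⟩
  exact Nat.card_of_isEmpty

theorem card_mapOrbits_strictSurjections_card_ne_zero [Fintype P] :
    Nat.card (MapOrbits G (strictSurjections P (Fin (Fintype.card P)))) ≠ 0 := by
  obtain ⟨φ, hφ, hφ'⟩ := exists_bijective_fin_of_isStrictOrder ((· < ·) : P → P → Prop)
  have : Nonempty (MapOrbits G (strictSurjections P (Fin (Fintype.card P)))) :=
    ⟨Quotient.mk _ ⟨φ, hφ, hφ'.surjective⟩⟩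
  exact Nat.card_pos.ne'

end StrictMaps

theorem stmt_6_general {P G : Type*} [Preorder P] [Fintype P] [Group G] [MulAction G P] :
    ∃ p : Polynomial ℚ, p.degree = (Fintype.card P : WithBot ℕ) ∧
      ∀ n : ℕ, p.eval (n : ℚ) =
        Nat.card (Quot (fun φ ψ : {φ : P → Fin n // ∀ p q : P, p < q → φ p < φ q} =>
          ∃ g : G, ∀ x : P, ψ.1 x = φ.1 (g⁻¹ • x))) := by
  let a (k : ℕ) : ℕ := Nat.card (MapOrbits G (strictSurjections P (Fin k)))
  obtain ⟨p, degree_p, eval_p⟩ := exists_polynomial_degree_eq_eval_eq_sum_choose_mul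
    (fun k ↦ (a k : ℚ)) (Nat.cast_ne_zero.2 (card_mapOrbits_strictSurjections_card_ne_zero G))
  refine ⟨p, degree_p, fun n ↦ ?_⟩
  change _ = (Nat.card (MapOrbits G (strictMaps P (Fin n))) : ℚ)
  rw [eval_p, card_mapOrbits_strictMaps_eq_sum_choose_mul, Fintype.card_fin]
  push_cast
  refine (sum_range_choose_mul_eq_of_eq_zero (fun k hk ↦ ?_) n).symm
  exact Nat.cast_eq_zero.2 (card_mapOrbits_strictSurjections_eq_zero G hk)

/-- Let `P` be a finite poset and `G` a finite group acting on `P` by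
automorphisms.  There exists a polynomial `p` with rational coefficients of degree
exactly `|P|` such that for all integers `n ≥ 1`, `p(n)` equals the number of
`G`-orbits of strictly order preserving maps `P → [n]`
(the action being `(g • φ)(x) = φ(g⁻¹ • x)`). -/
theorem stmt_6 {P G : Type*} [PartialOrder P] [Fintype P] [Group G] [Fintype G]
    [MulAction G P] (hact : ∀ (g : G) (p q : P), p < q → g • p < g • q) :
    ∃ p : Polynomial ℚ, p.degree = (Fintype.card P : WithBot ℕ) ∧
      ∀ n : ℕ, 1 ≤ n →
        p.eval (n : ℚ) =
          Nat.card (Quot (fun φ ψ : {φ : P → Fin n // ∀ p q : P, p < q → φ p < φ q} =>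
            ∃ g : G, ∀ x : P, ψ.1 x = φ.1 (g⁻¹ • x))) := by
  obtain ⟨p, degree_p, eval_p⟩ := stmt_6_general (P := P) (G := G)
  exact ⟨p, degree_p, fun n _ ↦ eval_p n⟩
end

section
/- (Pólya's enumeration theorem) Let G be a finite group acting on a finite set X, and let Y be a finite set with n = |Y| elements. Then the number of G-orbits of the induced action of G on the set Y^X of all maps f : X → Y satisfies |Y^X/G| = (1/|G|) · Σ_{g∈G} n^{c(g)}, where c(g) is the number of cycles of g as a permutation of X (i.e., the number of ⟨g⟩-orbits of X). -/
/-!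
A map `f : X → Y` is fixed by `g` exactly when it is constant on the orbits of `⟨g⟩`, so it amounts
to a free choice of a value in `Y` for each of the `c(g)` orbits. Thus `g` has `n ^ c(g)` fixed
points in `Y ^ X`, and Burnside's lemma averages these numbers to the number of orbits.
-/

theorem fixedBy_eq_fixedPoints_zpowers {G α : Type*} [Group G] [MulAction G α] (g : G) :
    MulAction.fixedBy α g = MulAction.fixedPoints (Subgroup.zpowers g) α := by
  ext a
  constructor
  · rintro ha ⟨h, hh⟩
    obtain ⟨k, rfl⟩ := Subgroup.mem_zpowers_iff.mp hh
    exact MulAction.mem_fixedBy_zpow ha k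
  · exact fun ha ↦ ha ⟨g, Subgroup.mem_zpowers g⟩

section ArrowAction

open MulAction

variable {G X Y : Type*} [Group G] [MulAction G X]

attribute [local instance] arrowAction

theorem mem_fixedPoints_arrow_iff_orbitRel_le_ker {f : X → Y} :
    f ∈ fixedPoints G (X → Y) ↔ orbitRel G X ≤ Setoid.ker f := by
  constructor
  · rintro hf _ x ⟨g, rfl⟩
    calc f (g • x) = (g⁻¹ • f) x := congrArg (fun k ↦ f (k • x)) (inv_inv g).symm
      _ = f x := congrFun (hf g⁻¹) x
  · intro hf g
    ext x
    exact hf ⟨g⁻¹, rfl⟩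

variable (G X Y) in
/-- The maps `X → Y` invariant under the action `(g • f) x = f (g⁻¹ • x)`, viewed as the maps on the
set of orbits of `X`; this lets us count them. -/
def fixedPointsArrowEquiv : fixedPoints G (X → Y) ≃ (orbitRel.Quotient G X → Y) :=
  (Equiv.subtypeEquivRight fun _ ↦ mem_fixedPoints_arrow_iff_orbitRel_le_ker).trans
    (Setoid.liftEquiv (orbitRel G X))

theorem card_fixedBy_arrow [Finite X] (g : G) :
    Nat.card (fixedBy (X → Y) g) =
      Nat.card Y ^ Nat.card (orbitRel.Quotient (Subgroup.zpowers g) X) := by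
  rw [fixedBy_eq_fixedPoints_zpowers,
    Nat.card_congr (fixedPointsArrowEquiv (Subgroup.zpowers g) X Y), Nat.card_fun]

variable (G X Y) in
theorem card_orbits_arrow_mul_card_group [Fintype G] [Finite X] [Finite Y] :
    Nat.card (orbitRel.Quotient G (X → Y)) * Nat.card G =
      ∑ g : G, Nat.card Y ^ Nat.card (orbitRel.Quotient (Subgroup.zpowers g) X) := by
  classical
  have := Fintype.ofFinite (X → Y)
  have burnside := sum_card_fixedBy_eq_card_orbits_mul_card_group G (X → Y)
  simpa only [← Nat.card_eq_fintype_card, card_fixedBy_arrow] using burnside.symm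

theorem orbitRel_arrow_iff {f h : X → Y} :
    orbitRel G (X → Y) f h ↔ ∃ g : G, ∀ x, h x = f (g⁻¹ • x) := by
  rw [(orbitRel G (X → Y)).comm']
  exact exists_congr fun g ↦ eq_comm.trans funext_iff

end ArrowAction

/-- Pólya's enumeration theorem. Let `G` be a finite group acting on a
finite set `X`, and let `Y` be a finite set with `n = |Y|` elements.  Then the number of
`G`-orbits of the induced action `(g • f)(x) = f(g⁻¹ • x)` on the set `Y^X` of all maps
`f : X → Y` satisfies `|Y^X/G| = (1/|G|) · Σ_{g ∈ G} n^{c(g)}`, where `c(g)` is the number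
of `⟨g⟩`-orbits of `X`. -/
theorem stmt_7 {G X Y : Type*} [Group G] [Fintype G] [Fintype X] [Fintype Y]
    [MulAction G X] :
    (Nat.card (Quot (fun f h : X → Y => ∃ g : G, ∀ x : X, h x = f (g⁻¹ • x))) : ℚ) =
      (Fintype.card G : ℚ)⁻¹ * ∑ g : G,
        (Fintype.card Y : ℚ) ^
          Nat.card (Quotient (MulAction.orbitRel (Subgroup.zpowers g) X)) := by
  let := arrowAction (G := G) (A := X) (B := Y)
  have card_quot : Nat.card (Quot fun f h : X → Y ↦ ∃ g : G, ∀ x : X, h x = f (g⁻¹ • x)) =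
      Nat.card (MulAction.orbitRel.Quotient G (X → Y)) :=
    Nat.card_congr (Quot.congrRight fun _ _ ↦ orbitRel_arrow_iff.symm)
  have card_ne_zero : (Fintype.card G : ℚ) ≠ 0 := Nat.cast_ne_zero.mpr Fintype.card_ne_zero
  rw [card_quot, eq_inv_mul_iff_mul_eq₀ card_ne_zero, mul_comm]
  simp only [← Nat.card_eq_fintype_card]
  exact_mod_cast card_orbits_arrow_mul_card_group G X Y
end

section
/- Let P be a finite poset and G a finite group acting on P by automorphisms, and let p be the polynomial with p(n) = |Hom(P,[n])/G| for all integers n ≥ 1. Then for all integers n ≥ 1, p(-n) = (-1)^{|P|} · |Hom°_+(P,[n])/G|, the number of G-orbits of even strictly order preserving maps P → [n], up to sign. -/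
/-!
Removing the top level of a map `α → [n + 1]` gives a recursion for both order polynomials of a
finite poset `α`: for order preserving maps by inclusion–exclusion over the set of maximal elements
sent to the top, for strict ones by partitioning according to that set. Up to the sign
`(-1) ^ |α|` these are the two halves of a single recursion over `ℤ`, whose solution is polynomial
by induction on `|α|`; this is Stanley's reciprocity.

An automorphism `g` of `P` fixes exactly the maps factoring through the poset of cycles of `g`, so
reciprocity for that poset computes the numbers of fixed maps, and
`(-1) ^ #cycles = (-1) ^ |P| * sign g` turns the sign into a character of `G`. Averaging over `G`
(Burnside), the sign sums to zero over the stabilizer of each map that is not even, which leaves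
the even orbits.
-/

namespace OrderReciprocity

universe u

section PolynomialSequences

open Polynomial

theorem exists_eval_add_one_sub_eval_eq (u : ℚ[X]) :
    ∃ F : ℚ[X], ∀ x : ℚ, F.eval (x + 1) - F.eval x = u.eval x := by
  induction u using Polynomial.induction_on' with
  | add u v hu hv =>
    obtain ⟨F, hF⟩ := hu
    obtain ⟨H, hH⟩ := hv
    refine ⟨F + H, fun x ↦ ?_⟩
    simp only [eval_add, ← hF, ← hH]
    ring
  | monomial n a =>
    refine ⟨C (a / (n + 1)) * Polynomial.bernoulli (n + 1), fun x ↦ ?_⟩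
    have hn : (n : ℚ) + 1 ≠ 0 := by positivity
    have hB := Polynomial.bernoulli_eval_one_add (n + 1) x
    simp only [eval_mul, eval_C, eval_monomial, add_comm x 1, hB]
    push_cast
    field_simp
    ring

theorem exists_eval_intCast_eq_of_sub_eq_eval {f : ℤ → ℚ} {u : ℚ[X]}
    (hf : ∀ k : ℤ, f (k + 1) - f k = u.eval (k : ℚ)) :
    ∃ p : ℚ[X], ∀ k : ℤ, p.eval (k : ℚ) = f k := by
  obtain ⟨F, hF⟩ := exists_eval_add_one_sub_eval_eq u
  have hper : Function.Periodic (fun k : ℤ ↦ f k - F.eval (k : ℚ)) 1 := fun k ↦ by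
    have := hF k
    push_cast
    linarith [hf k]
  refine ⟨F + C (f 0 - F.eval 0), fun k ↦ ?_⟩
  have hk := hper.int_mul_eq k
  simp only [Int.cast_id, mul_one, Int.cast_zero] at hk
  simp only [eval_add, eval_C]
  linarith

theorem eq_of_forall_eval_natCast_eq {R : Type*} [CommRing R] [IsDomain R] [CharZero R]
    {p q : R[X]} (h : ∀ n : ℕ, 1 ≤ n → p.eval (n : R) = q.eval (n : R)) : p = q :=
  eq_of_infinite_eval_eq p q <|
    ((Set.Ici_infinite 1).image Nat.cast_injective.injOn).mono <| Set.image_subset_iff.2 h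

end PolynomialSequences

section Counting

/-- The number of order preserving maps from `α` to an `n`-element chain: the order polynomial
of `α` at `n`. -/
noncomputable def monotoneCount (α : Type*) [Preorder α] (n : ℕ) : ℕ :=
  Nat.card {f : α → Fin n // Monotone f}

/-- The number of strictly order preserving maps from `α` to an `n`-element chain: the strict
order polynomial of `α` at `n`. -/
noncomputable def strictMonoCount (α : Type*) [Preorder α] (n : ℕ) : ℕ :=
  Nat.card {f : α → Fin n // StrictMono f}

/-- The two-sided sequence whose polynomiality is Stanley's reciprocity theorem: the order
polynomial of `α` at nonnegative arguments, the signed strict order polynomial at negative ones. -/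
noncomputable def orderCount (α : Type*) [Preorder α] : ℤ → ℤ
  | (n : ℕ) => monotoneCount α n
  | .negSucc n => (-1) ^ Nat.card α * strictMonoCount α (n + 1)

theorem orderCount_natCast (α : Type*) [Preorder α] (n : ℕ) :
    orderCount α n = monotoneCount α n := rfl

theorem orderCount_neg_natCast (α : Type*) [Preorder α] (n : ℕ) :
    orderCount α (-n) = (-1) ^ Nat.card α * strictMonoCount α n := by
  rcases n with _ | n
  · rcases isEmpty_or_nonempty α with hα | hα
    · simp [orderCount, monotoneCount, strictMonoCount, Subsingleton.monotone,
        Subsingleton.strictMono]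
    · simp [orderCount, monotoneCount, strictMonoCount]
  · exact congrArg (orderCount α) (Int.negSucc_eq n).symm

theorem orderCount_congr {α β : Type*} [Preorder α] [Preorder β] (e : α ≃o β) (k : ℤ) :
    orderCount α k = orderCount β k := by
  have hmono (n : ℕ) : monotoneCount α n = monotoneCount β n :=
    Nat.card_congr (Equiv.subtypeEquiv (e.toEquiv.arrowCongr (.refl _)) fun f ↦
      ⟨fun hf ↦ hf.comp e.symm.monotone, fun hf ↦ by
        simpa [Function.comp_def] using hf.comp e.monotone⟩)
  have hstrict (n : ℕ) : strictMonoCount α n = strictMonoCount β n :=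
    Nat.card_congr (Equiv.subtypeEquiv (e.toEquiv.arrowCongr (.refl _)) fun f ↦
      ⟨fun hf ↦ hf.comp e.symm.strictMono, fun hf ↦ by
        simpa [Function.comp_def] using hf.comp e.strictMono⟩)
  rcases k with n | n
  · exact congrArg _ (hmono n)
  · simp only [orderCount, hstrict, Nat.card_congr e.toEquiv]

theorem card_ne_last_eq {α : Type*} {n : ℕ} {D : (α → Fin (n + 1)) → Prop}
    {E : (α → Fin n) → Prop} (hDE : ∀ f : α → Fin n, D (fun a ↦ (f a).castSucc) ↔ E f) :
    Nat.card {f // D f ∧ ∀ a, f a ≠ Fin.last n} = Nat.card {f // E f} :=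
  Nat.card_congr
    { toFun f := ⟨fun a ↦ (f.1 a).castPred (f.2.2 a), (hDE _).1 (by simpa using f.2.1)⟩
      invFun f := ⟨fun a ↦ (f.1 a).castSucc, (hDE _).2 f.2, fun a ↦ Fin.castSucc_ne_last _⟩
      left_inv f := by simp
      right_inv f := by simp }

theorem card_eq_card_restrict {α β : Type*} {b : β} {A : Finset α} {D : (α → β) → Prop}
    {E : ({a // a ∉ A} → β) → Prop} (hD : ∀ f, D f → ∀ a ∈ A, f a = b)
    (hDE : ∀ f : α → β, (∀ a ∈ A, f a = b) → (D f ↔ E (fun a ↦ f a))) :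
    Nat.card {f // D f} = Nat.card {f // E f} := by
  classical
  let IsConst (f : α → β) : Prop := f ∘ Subtype.val = fun _ : {a // a ∈ A} ↦ b
  have hconst {f : α → β} : IsConst f ↔ ∀ a ∈ A, f a = b := by simp [IsConst, funext_iff]
  calc Nat.card {f // D f}
      = Nat.card {f : {f : α → β // IsConst f} // D f} :=
        Nat.card_congr (Equiv.subtypeSubtypeEquivSubtype fun hf ↦ hconst.2 (hD _ hf)).symm
    _ = Nat.card {f // E f} :=
        Nat.card_congr (Equiv.subtypeEquiv (Equiv.subtypePreimage (· ∈ A) fun _ ↦ b)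
          fun f ↦ hDE f (hconst.1 f.2))

variable {α β : Type*} [PartialOrder α] [PartialOrder β] [OrderTop β] {A : Finset α} {f : α → β}

theorem monotone_iff_restrict_of_isMax (hA : ∀ a ∈ A, IsMax a) (hf : ∀ a ∈ A, f a = ⊤) :
    Monotone f ↔ Monotone fun a : {a // a ∉ A} ↦ f a := by
  refine ⟨fun h a b hab ↦ h hab, fun h a b hab ↦ ?_⟩
  by_cases hb : b ∈ A
  · exact (hf b hb).symm ▸ le_top
  · have ha : a ∉ A := fun ha ↦ hb ((hA a ha).eq_of_le hab ▸ ha)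
    exact h (a := ⟨a, ha⟩) (b := ⟨b, hb⟩) hab

theorem strictMono_iff_restrict_of_isMax (hA : ∀ a ∈ A, IsMax a) (hf : ∀ a, f a = ⊤ ↔ a ∈ A) :
    StrictMono f ↔ StrictMono fun a : {a // a ∉ A} ↦ f a := by
  refine ⟨fun h a b hab ↦ h hab, fun h a b hab ↦ ?_⟩
  have ha : a ∉ A := fun ha ↦ (hA a ha).not_lt hab
  by_cases hb : b ∈ A
  · exact (hf b).2 hb ▸ lt_top_iff_ne_top.2 (mt (hf a).1 ha)
  · exact h (a := ⟨a, ha⟩) (b := ⟨b, hb⟩) hab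

theorem forall_isMax_ne_top_iff [Finite α] (hf : Monotone f) :
    (∀ a, IsMax a → f a ≠ ⊤) ↔ ∀ a, f a ≠ ⊤ := by
  refine ⟨fun h a ha ↦ ?_, fun h a _ ↦ h a⟩
  obtain ⟨b, hab, hb⟩ := Finite.exists_le_maximal (p := fun _ : α ↦ True) (a := a) trivial
  exact h b (maximal_true.1 hb) (top_le_iff.1 (ha ▸ hf hab))

theorem card_monotone_eq_top_on (hA : ∀ a ∈ A, IsMax a) (n : ℕ) :
    Nat.card {f : α → Fin (n + 1) // Monotone f ∧ ∀ a ∈ A, f a = ⊤} =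
      monotoneCount {a // a ∉ A} (n + 1) :=
  card_eq_card_restrict (fun _ hf ↦ hf.2) fun _ hf ↦
    (and_iff_left hf).trans (monotone_iff_restrict_of_isMax hA hf)

theorem card_strictMono_eq_top_iff (hA : ∀ a ∈ A, IsMax a) (n : ℕ) :
    Nat.card {f : α → Fin (n + 1) // StrictMono f ∧ ∀ a, f a = ⊤ ↔ a ∈ A} =
      strictMonoCount {a // a ∉ A} n := by
  rw [strictMonoCount, ← card_ne_last_eq (D := StrictMono) (E := StrictMono) fun f ↦ Iff.rfl]
  refine card_eq_card_restrict (b := ⊤) (fun f hf a ha ↦ (hf.2 a).2 ha) fun f hf ↦ ?_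
  have htop : (∀ a, f a = ⊤ ↔ a ∈ A) ↔ ∀ a : {a // a ∉ A}, f a ≠ Fin.last n :=
    ⟨fun h a ↦ mt (h a).1 a.2, fun h a ↦ ⟨not_imp_not.1 fun ha ↦ h ⟨a, ha⟩, hf a⟩⟩
  rw [← htop]
  exact and_congr_left (strictMono_iff_restrict_of_isMax hA)

end Counting

section Recurrences

open Finset Polynomial

theorem card_filter_subtype {X : Type*} {D E : X → Prop} [DecidablePred E] [Fintype {x // D x}] :
    #{x : {x // D x} | E x} = Nat.card {x // D x ∧ E x} := by
  rw [← Fintype.card_subtype, ← Nat.card_eq_fintype_card]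
  exact Nat.card_congr (Equiv.subtypeSubtypeEquivSubtypeInter D E)

theorem card_eq_card_add_card_notMem {α : Type*} [Finite α] (A : Finset α) :
    Nat.card α = #A + Nat.card {a // a ∉ A} := by
  classical
  have := Fintype.ofFinite α
  rw [Nat.card_eq_fintype_card, Nat.card_eq_fintype_card, Fintype.card_subtype_compl,
    Fintype.card_coe, Nat.add_sub_cancel' A.card_le_univ]

variable (α : Type*) [PartialOrder α] [Fintype α]

open Classical in
/-- The maximal elements of a finite poset, the candidates for the top level of an order
preserving map to a chain. -/
noncomputable def maximalElements : Finset α := {a | IsMax a}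

variable {α} in
theorem isMax_of_mem_powerset {A : Finset α} (hA : A ∈ (maximalElements α).powerset) :
    ∀ a ∈ A, IsMax a := fun _ ha ↦ by
  simpa [maximalElements] using mem_powerset.1 hA ha

theorem monotoneCount_eq_sum_powerset (n : ℕ) :
    (monotoneCount α n : ℤ) = ∑ A ∈ (maximalElements α).powerset,
      (-1) ^ #A * (monotoneCount {a // a ∉ A} (n + 1) : ℤ) := by
  classical
  let topAt (a : α) : Finset {f : α → Fin (n + 1) // Monotone f} := {f | f.1 a = ⊤}
  have hnone : #((maximalElements α).inf fun a ↦ (topAt a)ᶜ) = monotoneCount α n := by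
    rw [monotoneCount, ← card_ne_last_eq (D := Monotone) (E := Monotone) fun f ↦ Iff.rfl,
      ← card_filter_subtype]
    congr 1
    ext f
    simp only [topAt, maximalElements, mem_inf, mem_compl, mem_filter_univ]
    exact forall_isMax_ne_top_iff f.2
  have hall : ∀ A ∈ (maximalElements α).powerset,
      #(A.inf topAt) = monotoneCount {a // a ∉ A} (n + 1) := fun A hA ↦ by
    rw [← card_monotone_eq_top_on (isMax_of_mem_powerset hA), ← card_filter_subtype]
    congr 1
    ext f
    simp [topAt, mem_inf]
  rw [← hnone, inclusion_exclusion_card_inf_compl]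
  exact sum_congr rfl fun A hA ↦ by rw [hall A hA]

theorem strictMonoCount_succ_eq_sum_powerset (n : ℕ) :
    strictMonoCount α (n + 1) =
      ∑ A ∈ (maximalElements α).powerset, strictMonoCount {a // a ∉ A} n := by
  classical
  let topFibre (f : {f : α → Fin (n + 1) // StrictMono f}) : Finset α := {a | f.1 a = ⊤}
  have hmaps (f) : topFibre f ∈ (maximalElements α).powerset := by
    refine mem_powerset.2 fun a ha ↦ mem_filter.2 ⟨mem_univ a, ?_⟩
    exact isMax_iff_forall_not_lt.2 fun b hab ↦
      ((f.2 hab).trans_le le_top).ne (mem_filter.1 ha).2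
  have hfibre : ∀ A ∈ (maximalElements α).powerset,
      #{f | topFibre f = A} = strictMonoCount {a // a ∉ A} n := fun A hA ↦ by
    rw [← card_strictMono_eq_top_iff (isMax_of_mem_powerset hA), ← card_filter_subtype]
    congr 1
    ext f
    simp [topFibre, Finset.ext_iff]
  rw [strictMonoCount, Nat.card_eq_fintype_card, ← card_univ,
    card_eq_sum_card_fiberwise fun f _ ↦ hmaps f]
  exact sum_congr rfl hfibre

theorem orderCount_eq_sum_powerset (k : ℤ) :
    orderCount α k = ∑ A ∈ (maximalElements α).powerset,
      (-1) ^ #A * orderCount {a // a ∉ A} (k + 1) := by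
  rcases k with n | n
  · exact monotoneCount_eq_sum_powerset α n
  · have hk : Int.negSucc n + 1 = -(n : ℤ) := by simp [Int.negSucc_eq]
    simp only [hk, orderCount_neg_natCast]
    rw [orderCount, strictMonoCount_succ_eq_sum_powerset, Nat.cast_sum, mul_sum]
    refine sum_congr rfl fun A _ ↦ ?_
    rw [card_eq_card_add_card_notMem A, pow_add, mul_assoc]

theorem exists_eval_eq_orderCount (α : Type u) [PartialOrder α] [Finite α] :
    ∃ p : ℚ[X], ∀ k : ℤ, p.eval (k : ℚ) = orderCount α k := by
  induction hm : Nat.card α using Nat.strong_induction_on generalizing α with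
  | _ m ih =>
  have := Fintype.ofFinite α
  classical
  let nonemptySubsets := (maximalElements α).powerset.erase ∅
  have hsmall : ∀ A ∈ nonemptySubsets,
      ∃ p : ℚ[X], ∀ k : ℤ, p.eval (k : ℚ) = orderCount {a // a ∉ A} k := by
    intro A hA
    have hpos : 0 < #A := card_pos.2 (nonempty_iff_ne_empty.2 (ne_of_mem_erase hA))
    have hcard := card_eq_card_add_card_notMem A
    exact ih _ (by omega) _ rfl
  choose! p hp using hsmall
  refine exists_eval_intCast_eq_of_sub_eq_eval
    (u := -∑ A ∈ nonemptySubsets, (-1) ^ #A * (p A).comp (X + 1)) fun k ↦ ?_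
  have hempty : orderCount {a // a ∉ (∅ : Finset α)} (k + 1) = orderCount α (k + 1) :=
    orderCount_congr ⟨Equiv.subtypeUnivEquiv fun a ↦ notMem_empty a, Iff.rfl⟩ _
  have hrec : orderCount α k = orderCount α (k + 1) +
      ∑ A ∈ nonemptySubsets, (-1) ^ #A * orderCount {a // a ∉ A} (k + 1) := by
    rw [← hempty, orderCount_eq_sum_powerset α k, ← add_sum_erase _ _ (empty_mem_powerset _),
      card_empty, pow_zero, one_mul]
  have heval : ∀ A ∈ nonemptySubsets, ((-1) ^ #A * (p A).comp (X + 1)).eval (k : ℚ) =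
      (-1) ^ #A * orderCount {a // a ∉ A} (k + 1) := fun A hA ↦ by
    rw [← hp A hA]
    simp
  rw [eval_neg, eval_finsetSum, sum_congr rfl heval, hrec]
  push_cast
  ring

end Recurrences

section Cycles

open Equiv.Perm

variable {α : Type*} [Fintype α] [DecidableEq α]

theorem card_quotient_sameCycle (σ : Equiv.Perm α) :
    Nat.card (Quotient (SameCycle.setoid σ)) =
      Fintype.card (Function.fixedPoints σ) + σ.cycleType.card := by
  obtain ⟨b⟩ := Equiv.Perm.Basis.nonempty σ
  have hb_support (c : σ.cycleFactorsFinset) : b c ∈ σ.support :=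
    mem_cycleFactorsFinset_support_le c.2 (b.mem_support_self c)
  have hb_move (c : σ.cycleFactorsFinset) : σ (b c) ≠ b c :=
    mem_support.1 (hb_support c)
  let rep : Function.fixedPoints σ ⊕ σ.cycleFactorsFinset → Quotient (SameCycle.setoid σ) :=
    Sum.elim (fun x ↦ ⟦x.1⟧) fun c ↦ ⟦b c⟧
  have hinj : rep.Injective := by
    rintro (x | c) (y | d) h <;> have hcycle := Quotient.exact h
    · exact congrArg Sum.inl (Subtype.ext (hcycle.eq_of_left x.2))
    · exact absurd (hcycle.apply_eq_self_iff.1 x.2) (hb_move d)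
    · exact absurd (hcycle.apply_eq_self_iff.2 y.2) (hb_move c)
    · exact congrArg Sum.inr (Subtype.ext (by
        rw [← b.cycleOf_eq c, ← b.cycleOf_eq d]; exact hcycle.cycleOf_eq))
  have hsurj : rep.Surjective := by
    rintro ⟨x⟩
    by_cases hx : σ x = x
    · exact ⟨.inl ⟨x, hx⟩, rfl⟩
    · let c : σ.cycleFactorsFinset :=
        ⟨σ.cycleOf x, cycleOf_mem_cycleFactorsFinset_iff.2 (mem_support.2 hx)⟩
      refine ⟨.inr c, Quotient.sound ?_⟩
      exact (sameCycle_iff_cycleOf_eq_of_mem_support (hb_support c) (mem_support.2 hx)).2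
        (b.cycleOf_eq c)
  rw [← Nat.card_eq_of_bijective rep ⟨hinj, hsurj⟩, Nat.card_sum]
  simp [cycleType_def]

theorem sign_eq_neg_one_pow_card_add_card_quotient (σ : Equiv.Perm α) :
    sign σ = (-1) ^ (Fintype.card α + Nat.card (Quotient (SameCycle.setoid σ))) := by
  have hparity : Fintype.card α + Nat.card (Quotient (SameCycle.setoid σ)) =
      σ.cycleType.sum + σ.cycleType.card + 2 * Fintype.card (Function.fixedPoints σ) := by
    have := σ.sum_cycleType_le
    rw [card_quotient_sameCycle, card_fixedPoints]
    omega
  rw [hparity, pow_add _ _ (2 * _), pow_mul, neg_one_sq, one_pow, mul_one, sign_of_cycleType]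

end Cycles

section CyclePoset

/-- The set of cycles of an automorphism `σ` of a poset, ordered by `a ≤ b` when some element of
`a` lies below some element of `b`. Order preserving maps out of it are the `σ`-invariant order
preserving maps out of the poset. -/
def CyclePoset {α : Type*} [LE α] (σ : α ≃o α) : Type _ :=
  Quotient (Equiv.Perm.SameCycle.setoid σ.toEquiv)

namespace CyclePoset

variable {α β : Type*} [PartialOrder α] {σ : α ≃o α}

/-- The cycle of `σ` through a given element. -/
def mk (σ : α ≃o α) (x : α) : CyclePoset σ :=
  Quotient.mk _ x

theorem mk_surjective (σ : α ≃o α) : (mk σ).Surjective := Quotient.mk_surjective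

theorem mk_iterate (x : α) (n : ℕ) : mk σ (σ^[n] x) = mk σ x :=
  (Quotient.sound ⟨n, by
    rw [zpow_natCast, ← Equiv.Perm.iterate_eq_pow]; rfl⟩ : mk σ x = mk σ (σ^[n] x)).symm

theorem card_invariant_eq {D : (α → β) → Prop} {E : (CyclePoset σ → β) → Prop}
    (hDE : ∀ f, D (f ∘ mk σ) ↔ E f) :
    Nat.card {φ : α → β // D φ ∧ ∀ x, φ (σ x) = φ x} = Nat.card {f // E f} := by
  refine (Nat.card_eq_of_bijective
    (fun f : {f // E f} ↦ (⟨f.1 ∘ mk σ, (hDE f.1).2 f.2, fun x ↦ congrArg f.1 (mk_iterate x 1)⟩ :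
      {φ : α → β // D φ ∧ ∀ x, φ (σ x) = φ x})) ⟨fun f g hfg ↦ ?_, ?_⟩).symm
  · exact Subtype.ext ((mk_surjective σ).injective_comp_right (congrArg Subtype.val hfg))
  · rintro ⟨φ, hφ, hinv⟩
    have hpow (x : α) (k : ℤ) : φ ((σ.toEquiv ^ k) x) = φ x := by
      induction k with
      | zero => rfl
      | succ k ih => rw [add_comm, zpow_add, zpow_one, ← ih]; exact hinv _
      | pred k ih => rw [← ih, sub_eq_neg_add, zpow_add, zpow_neg_one, ← hinv]; simp
    let f : CyclePoset σ → β := Quotient.lift φ fun x y ⟨k, hk⟩ ↦ by rw [← hk, hpow]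
    exact ⟨⟨f, (hDE f).1 hφ⟩, rfl⟩

variable [Finite α]

theorem mk_eq_mk_iff {x y : α} : mk σ x = mk σ y ↔ ∃ n : ℕ, σ^[n] x = y := by
  refine ⟨fun h ↦ ?_, fun ⟨n, hn⟩ ↦ hn ▸ (mk_iterate x n).symm⟩
  obtain ⟨n, -, hn⟩ := Equiv.Perm.SameCycle.exists_pow_eq' (Quotient.exact h)
  exact ⟨n, by rw [← hn, ← Equiv.Perm.iterate_eq_pow]; rfl⟩

theorem eq_of_mk_eq_mk_of_le {x y : α} (h : mk σ x = mk σ y) (hxy : x ≤ y) : x = y := by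
  obtain ⟨n, rfl⟩ := mk_eq_mk_iff.1 h
  refine hxy.eq_of_not_lt fun hlt ↦ not_injective_infinite_finite (fun k ↦ (σ^[n])^[k] x) ?_
  exact ((σ.strictMono.iterate n).strictMono_iterate_of_lt_map hlt).injective

instance : PartialOrder (CyclePoset σ) where
  le a b := ∃ x y, mk σ x = a ∧ mk σ y = b ∧ x ≤ y
  le_refl a := by
    obtain ⟨x, rfl⟩ := mk_surjective σ a
    exact ⟨x, x, rfl, rfl, le_rfl⟩
  le_trans := by
    rintro _ _ _ ⟨x, y, rfl, rfl, hxy⟩ ⟨y', z, hy, rfl, hyz⟩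
    obtain ⟨n, rfl⟩ := mk_eq_mk_iff.1 hy.symm
    exact ⟨σ^[n] x, z, mk_iterate x n, rfl, (σ.monotone.iterate n hxy).trans hyz⟩
  le_antisymm := by
    rintro _ _ ⟨x, y, rfl, rfl, hxy⟩ ⟨y', x', hy, hx, hyx⟩
    obtain ⟨n, rfl⟩ := mk_eq_mk_iff.1 hy.symm
    have hle : σ^[n] x ≤ σ^[n] y := σ.monotone.iterate n hxy
    have heq : σ^[n] x = x' :=
      eq_of_mk_eq_mk_of_le ((mk_iterate x n).trans hx.symm) (hle.trans hyx)
    rw [← mk_iterate x n, ← mk_iterate y n, hle.antisymm (hyx.trans heq.ge)]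

theorem mk_strictMono : StrictMono (mk σ) := fun x y hxy ↦
  lt_of_le_of_ne ⟨x, y, rfl, rfl, hxy.le⟩ fun h ↦ hxy.ne (eq_of_mk_eq_mk_of_le h hxy.le)

variable [Preorder β]

theorem monotone_comp_mk_iff {f : CyclePoset σ → β} : Monotone (f ∘ mk σ) ↔ Monotone f := by
  refine ⟨?_, fun h ↦ h.comp mk_strictMono.monotone⟩
  rintro h _ _ ⟨x, y, rfl, rfl, hxy⟩
  exact h hxy

theorem strictMono_comp_mk_iff {f : CyclePoset σ → β} :
    StrictMono (f ∘ mk σ) ↔ StrictMono f := by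
  refine ⟨fun h a b hab ↦ ?_, fun h ↦ h.comp mk_strictMono⟩
  obtain ⟨x, y, rfl, rfl, hxy⟩ := hab.le
  exact h (hxy.lt_of_ne fun hne ↦ hab.ne (congrArg (mk σ) hne))

end CyclePoset

end CyclePoset

section Burnside

open MulAction Finset

variable {G X : Type*} [Group G] [MulAction G X]

/-- The orbits of the points satisfying `D`, meaningful when `D` is `G`-invariant. -/
abbrev OrbitsOn (G : Type*) {X : Type*} [Group G] [MulAction G X] (D : X → Prop) : Type _ :=
  Quot fun x y : {x : X // D x} ↦ ∃ g : G, y.1 = g • x.1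

theorem sum_card_fixed_eq_card_orbits_mul_card [Fintype G] [Finite X] {D : X → Prop}
    (hD : ∀ (g : G) (x : X), D x → D (g • x)) :
    ∑ g : G, Nat.card {x // D x ∧ g • x = x} = Nat.card (OrbitsOn G D) * Nat.card G := by
  classical
  let S : SubMulAction G X := ⟨{x | D x}, fun g x ↦ hD g x⟩
  have := Fintype.ofFinite S
  have := Fintype.ofFinite (orbitRel.Quotient G S)
  have horbits : Nat.card (OrbitsOn G D) = Nat.card (orbitRel.Quotient G S) :=
    Nat.card_congr ((Quot.congrRight fun x y ↦ by
      rw [comm_of (orbitRel G S).r]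
      exact ⟨fun ⟨g, hg⟩ ↦ ⟨g, Subtype.ext hg.symm⟩,
        fun ⟨g, hg⟩ ↦ ⟨g, (congrArg Subtype.val hg).symm⟩⟩).trans (.refl (Quot (orbitRel G S).r)))
  have hfixed (g : G) : Nat.card {x // D x ∧ g • x = x} = Fintype.card (fixedBy S g) := by
    rw [← Nat.card_eq_fintype_card]
    exact Nat.card_congr ((Equiv.subtypeSubtypeEquivSubtypeInter D fun x ↦ g • x = x).symm.trans
      (Equiv.subtypeEquivRight fun _ ↦ by
        rw [mem_fixedBy, Subtype.ext_iff]; rfl))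
  rw [horbits, Nat.card_eq_fintype_card, Nat.card_eq_fintype_card,
    ← sum_card_fixedBy_eq_card_orbits_mul_card_group G S]
  exact sum_congr rfl fun g _ ↦ hfixed g

/-- A point is even with respect to a sign character when the character is trivial on its
stabilizer. -/
def IsEven (χ : G →* ℤˣ) (x : X) : Prop :=
  ∀ h : G, h • x = x → χ h = 1

theorem IsEven.smul {χ : G →* ℤˣ} {x : X} (hx : IsEven χ x) (g : G) : IsEven χ (g • x) := by
  intro h hfix
  have hconj : χ (g⁻¹ * h * g) = 1 := hx _ (by rw [mul_smul, mul_smul, hfix, inv_smul_smul])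
  rwa [map_mul, map_mul, map_inv, mul_right_comm, inv_mul_cancel, one_mul] at hconj

theorem sum_stabilizer_eq_ite [Fintype G] (χ : G →* ℤˣ) (x : X)
    [DecidablePred fun g : G ↦ g • x = x] [Decidable (IsEven χ x)] :
    ∑ g : G with g • x = x, (χ g : ℤ) =
      if IsEven χ x then #{g : G | g • x = x} else 0 := by
  classical
  let ψ : stabilizer G x →* ℤˣ := χ.comp (stabilizer G x).subtype
  have hcard : Fintype.card (stabilizer G x) = #{g : G | g • x = x} :=
    Fintype.card_of_subtype _ (by simp)
  have hψ : (Units.coeHom ℤ).comp ψ = 1 ↔ IsEven χ x := by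
    simp [ψ, IsEven, MonoidHom.ext_iff]
  have hsum := sum_hom_units ((Units.coeHom ℤ).comp ψ)
  simp only [hψ, hcard] at hsum
  rw [Finset.sum_subtype (p := (· ∈ stabilizer G x)) _ (by simp)]
  exact hsum

theorem sum_mul_card_fixed_eq_sum_card_isEven_fixed [Fintype G] [Finite X] (χ : G →* ℤˣ)
    (D : X → Prop) :
    ∑ g : G, (χ g : ℤ) * Nat.card {x // D x ∧ g • x = x} =
      ∑ g : G, (Nat.card {x // (D x ∧ IsEven χ x) ∧ g • x = x} : ℤ) := by
  classical
  have := Fintype.ofFinite X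
  have hcard (E : X → Prop) [DecidablePred E] (g : G) : (Nat.card {x // E x ∧ g • x = x} : ℤ) =
      ∑ x with E x, if g • x = x then 1 else 0 := by
    rw [Nat.card_eq_fintype_card, Fintype.card_subtype, ← filter_filter, sum_boole]
  simp only [hcard, mul_sum, mul_ite, mul_one, mul_zero]
  rw [sum_comm, sum_comm (s := univ), sum_filter, sum_filter]
  refine sum_congr rfl fun x _ ↦ ?_
  rw [← sum_filter, sum_stabilizer_eq_ite, sum_boole, ite_and, Nat.cast_ite, Nat.cast_zero]

theorem sum_mul_card_fixed_eq_card_even_orbits_mul_card [Fintype G] [Finite X] (χ : G →* ℤˣ)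
    {D : X → Prop} (hD : ∀ (g : G) (x : X), D x → D (g • x)) :
    ∑ g : G, (χ g : ℤ) * Nat.card {x // D x ∧ g • x = x} =
      Nat.card (OrbitsOn G fun x ↦ D x ∧ IsEven χ x) * Nat.card G := by
  rw [sum_mul_card_fixed_eq_sum_card_isEven_fixed]
  exact_mod_cast sum_card_fixed_eq_card_orbits_mul_card (D := fun x ↦ D x ∧ IsEven χ x)
    fun g x hx ↦ ⟨hD g x hx.1, hx.2.smul g⟩

end Burnside

section EquivariantReciprocity

open Equiv.Perm MulAction Polynomial

attribute [local instance] arrowAction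

variable {P : Type u} {β G : Type*} [Group G] [MulAction G P]

theorem smul_eq_self_iff_forall_apply_smul {g : G} {φ : P → β} :
    g • φ = φ ↔ ∀ x, φ (g • x) = φ x := by
  rw [smul_eq_iff_eq_inv_smul, eq_comm, funext_iff]
  change (∀ x, φ (g⁻¹⁻¹ • x) = φ x) ↔ _
  rw [inv_inv]

theorem card_orbitsOn_eq {D E : (P → β) → Prop} (hDE : ∀ φ, D φ ↔ E φ) :
    Nat.card (OrbitsOn G D) = Nat.card (Quot fun φ ψ : {φ : P → β // E φ} ↦
      ∃ g : G, ∀ x, ψ.1 x = φ.1 (g⁻¹ • x)) := by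
  obtain rfl : D = E := funext fun φ ↦ propext (hDE φ)
  simp only [OrbitsOn, funext_iff]
  rfl

variable [PartialOrder P] [Fintype P] [DecidableEq P]

theorem neg_one_pow_card_cyclePoset (σ : P ≃o P) :
    (-1 : ℤ) ^ Nat.card (CyclePoset σ) = (-1) ^ Fintype.card P * (sign σ.toEquiv : ℤ) := by
  rw [sign_eq_neg_one_pow_card_add_card_quotient, Units.val_pow_eq_pow_val, Units.val_neg,
    Units.val_one, pow_add, ← mul_assoc, ← mul_pow, neg_one_mul, neg_neg, one_pow, one_mul]
  rfl

theorem exists_eval_eq_card_invariant (σ : P ≃o P) :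
    ∃ f : ℚ[X],
      (∀ n : ℕ, f.eval (n : ℚ) =
        Nat.card {φ : P → Fin n // Monotone φ ∧ ∀ x, φ (σ x) = φ x}) ∧
      ∀ n : ℕ, f.eval (-n : ℚ) = (-1) ^ Fintype.card P * ((sign σ.toEquiv : ℤ) *
        Nat.card {φ : P → Fin n // StrictMono φ ∧ ∀ x, φ (σ x) = φ x}) := by
  have : Finite (CyclePoset σ) := .of_surjective _ (CyclePoset.mk_surjective σ)
  obtain ⟨f, hf⟩ := exists_eval_eq_orderCount (CyclePoset σ)
  refine ⟨f, fun n ↦ ?_, fun n ↦ ?_⟩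
  · rw [CyclePoset.card_invariant_eq fun _ ↦ CyclePoset.monotone_comp_mk_iff]
    have hn := hf n
    rw [Int.cast_natCast, orderCount_natCast] at hn
    exact_mod_cast hn
  · rw [CyclePoset.card_invariant_eq fun _ ↦ CyclePoset.strictMono_comp_mk_iff, ← mul_assoc]
    have hn := hf (-n)
    rw [orderCount_neg_natCast, neg_one_pow_card_cyclePoset] at hn
    exact_mod_cast hn

theorem exists_eval_eq_card_smul_eq_self {g : G} (hg : StrictMono fun x : P ↦ g • x)
    (hg_inv : StrictMono fun x : P ↦ g⁻¹ • x) :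
    ∃ f : ℚ[X],
      (∀ n : ℕ, f.eval (n : ℚ) = Nat.card {φ : P → Fin n // Monotone φ ∧ g • φ = φ}) ∧
      ∀ n : ℕ, f.eval (-n : ℚ) = (-1) ^ Fintype.card P * ((sign (toPerm g : Equiv.Perm P) : ℤ) *
        Nat.card {φ : P → Fin n // StrictMono φ ∧ g • φ = φ}) := by
  simp only [smul_eq_self_iff_forall_apply_smul]
  exact exists_eval_eq_card_invariant
    ((toPerm g : Equiv.Perm P).toOrderIso hg.monotone hg_inv.monotone)

theorem exists_eval_eq_card_orbits [Finite G] (hG : ∀ g : G, StrictMono fun x : P ↦ g • x) :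
    ∃ q : ℚ[X],
      (∀ n : ℕ, q.eval (n : ℚ) = Nat.card (OrbitsOn G fun φ : P → Fin n ↦ Monotone φ)) ∧
      ∀ n : ℕ, q.eval (-n : ℚ) = (-1) ^ Fintype.card P *
        Nat.card (OrbitsOn G fun φ : P → Fin n ↦
          StrictMono φ ∧ IsEven (sign.comp (toPermHom G P)) φ) := by
  have := Fintype.ofFinite G
  choose f hf hf_neg using fun g : G ↦ exists_eval_eq_card_smul_eq_self (hG g) (hG g⁻¹)
  have hcard : (Nat.card G : ℚ) ≠ 0 := mod_cast Nat.card_pos.ne'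
  refine ⟨C (Nat.card G : ℚ)⁻¹ * ∑ g, f g, fun n ↦ ?_, fun n ↦ ?_⟩ <;>
    rw [eval_mul, eval_C, eval_finsetSum, inv_mul_eq_iff_eq_mul₀ hcard]
  · have hburnside := sum_card_fixed_eq_card_orbits_mul_card (D := Monotone (α := P) (β := Fin n))
      fun g φ hφ ↦ hφ.comp (hG g⁻¹).monotone
    simp only [hf]
    rw [mul_comm]
    exact_mod_cast hburnside
  · have hburnside := sum_mul_card_fixed_eq_card_even_orbits_mul_card
      (sign.comp (toPermHom G P)) (D := StrictMono (α := P) (β := Fin n))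
      fun g φ hφ ↦ hφ.comp (hG g⁻¹)
    simp only [hf_neg]
    rw [← Finset.mul_sum, mul_left_comm, mul_comm (Nat.card G : ℚ)]
    congr 1
    exact_mod_cast hburnside

end EquivariantReciprocity

end OrderReciprocity

/-- Let `P` be a finite poset and `G` a finite group acting on `P` by
automorphisms, and let `p` be the polynomial with `p(n) = |Hom(P,[n])/G|` for all
integers `n ≥ 1`.  Then for all integers `n ≥ 1` we have
`p(-n) = (-1)^{|P|} · |Hom°₊(P,[n])/G|`, the number of `G`-orbits of even strictly order
preserving maps `P → [n]`, up to sign.  (A map `φ` is even if every `g ∈ G` fixing `φ`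
has sign `+1` as a permutation of `P`.) -/
theorem stmt_9 {P G : Type*} [PartialOrder P] [Fintype P] [DecidableEq P]
    [Group G] [Fintype G] [MulAction G P]
    (hact : ∀ (g : G) (p q : P), p < q → g • p < g • q)
    (p : Polynomial ℚ)
    (hp : ∀ n : ℕ, 1 ≤ n →
      p.eval (n : ℚ) =
        Nat.card (Quot (fun φ ψ : {φ : P → Fin n // ∀ p q : P, p < q → φ p ≤ φ q} =>
          ∃ g : G, ∀ x : P, ψ.1 x = φ.1 (g⁻¹ • x))))
    (n : ℕ) (hn : 1 ≤ n) :
    p.eval (-(n : ℚ)) = (-1) ^ (Fintype.card P) *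
      Nat.card (Quot (fun φ ψ : {φ : P → Fin n //
          (∀ p q : P, p < q → φ p < φ q) ∧
          ∀ g : G, (∀ x : P, φ (g⁻¹ • x) = φ x) →
            Equiv.Perm.sign (MulAction.toPerm g : Equiv.Perm P) = 1} =>
        ∃ g : G, ∀ x : P, ψ.1 x = φ.1 (g⁻¹ • x))) := by
  obtain ⟨q, hq, hq_neg⟩ := OrderReciprocity.exists_eval_eq_card_orbits fun g x y ↦ hact g x y
  have hpq : p = q := OrderReciprocity.eq_of_forall_eval_natCast_eq fun m hm ↦ by
    rw [hp m hm, hq, OrderReciprocity.card_orbitsOn_eq fun φ : P → Fin m ↦ monotone_iff_forall_lt]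
  rw [hpq, hq_neg, OrderReciprocity.card_orbitsOn_eq]
  refine fun φ ↦ and_congr_right fun _ ↦ forall_congr' fun g ↦ imp_congr_left ?_
  exact funext_iff
end

section
/- Let P be a finite poset and G a finite group acting on P by automorphisms, and let p be the polynomial with p(n) = |Hom°(P,[n])/G| for all integers n ≥ 1. Then for all integers n ≥ 1, p(-n) = (-1)^{|P|} · |Hom_+(P,[n])/G|, the number of G-orbits of even order preserving maps P → [n], up to sign. -/
/-!
By Burnside's lemma, `|G| * |Hom°(P, [n]) / G|` is the sum over `g ∈ G` of the number of strict
maps fixed by `g`, and these are the strict maps on the set `Q` of `g`-orbits of `P`. A map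
`Q → [n]` is a flag `∅ ⊆ {φ ≤ 1} ⊆ ⋯ ⊆ {φ ≤ n} = Q` of level sets, so, up to the sign
`(-1) ^ |Q|`, strict maps are counted by an entry of `u ^ n` for a unipotent element `u` of the
incidence algebra of the subsets of `Q`. The entries of the powers of `u` are polynomial in the
exponent, and the exponent `-n` counts weak maps: `u⁻¹` is the weak analogue of `u`, because the
entries of their product are alternating sums over Boolean intervals, which vanish unless the
interval is a point, and since the order on `Q` is acyclic this happens only on the diagonal.
The sign satisfies `(-1) ^ |Q| = (-1) ^ |P| * sgn g`, and the Burnside sum weighted by `sgn g`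
counts the orbits of even maps, since a nontrivial character of a stabilizer sums to zero.
-/

section PolynomialIdentity

open Polynomial

theorem polynomial_eq_of_forall_eval_natCast_eq {R : Type*} [CommRing R] [IsDomain R] [CharZero R]
    {p q : R[X]} (h : ∀ n : ℕ, 1 ≤ n → p.eval (n : R) = q.eval (n : R)) : p = q := by
  refine eq_of_infinite_eval_eq p q <|
    ((Set.Ici_infinite 1).image (Nat.cast_injective (R := R)).injOn).mono ?_
  rintro _ ⟨n, hn, rfl⟩
  exact h n hn

end PolynomialIdentity

section UnipotentPowers

open Finset Polynomial

theorem unit_zpow_eq_sum_choose_smul_sub_one_pow {A : Type*} [Ring A] (u : Aˣ) {d : ℕ}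
    (hu : (u - 1 : A) ^ d = 0) (m : ℤ) :
    ((u ^ m : Aˣ) : A) = ∑ k ∈ range d, Ring.choose m k • (u - 1 : A) ^ k := by
  set R : ℤ → A := fun m ↦ ∑ k ∈ range d, Ring.choose m k • (u - 1 : A) ^ k with hR
  have R_zero : R 0 = 1 := by
    cases d with
    | zero => simpa [hR] using hu.symm
    | succ d => simp [hR, sum_range_succ']
  have R_add_one (m : ℤ) : R (m + 1) = R m * u := by
    cases d with
    | zero => simp [hR]
    | succ d =>
      calc R (m + 1)
          = R m + ∑ k ∈ range d, Ring.choose m k • (u - 1 : A) ^ (k + 1) := by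
            simp only [hR, sum_range_succ', Ring.choose_succ_succ, add_smul, sum_add_distrib,
              Ring.choose_zero_right]
            abel
        _ = R m + R m * (u - 1) := by
            simp only [hR, sum_range_succ, add_mul, sum_mul, smul_mul_assoc,
              ← pow_succ, hu, smul_zero, add_zero]
        _ = R m * u := by rw [mul_sub, mul_one, add_sub_cancel]
  change _ = R m
  induction m with
  | zero => simp [R_zero]
  | succ m ih => rw [R_add_one, ← ih, zpow_add_one, Units.val_mul]
  | pred m ih =>
    rw [zpow_sub_one, Units.val_mul, ih, Units.mul_inv_eq_iff_eq_mul, ← R_add_one, sub_add_cancel]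

theorem exists_polynomial_eval_intCast_eq_choose (K : Type*) [Field K] [CharZero K] (k : ℕ) :
    ∃ q : K[X], ∀ m : ℤ, q.eval (m : K) = (Ring.choose m k : ℤ) := by
  refine ⟨C (k.factorial : K)⁻¹ * descPochhammer K k, fun m ↦ ?_⟩
  have h : (descPochhammer ℤ k).eval m = k.factorial * Ring.choose m k := by
    rw [eval_eq_smeval, Ring.descPochhammer_eq_factorial_smul_choose, nsmul_eq_mul]
  have hk : (k.factorial : K) ≠ 0 := mod_cast k.factorial_ne_zero
  rw [eval_mul, eval_C, ← descPochhammer_map (Int.castRingHom K), ← eq_intCast (Int.castRingHom K),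
    eval_map_apply, h, inv_mul_eq_iff_eq_mul₀ hk]
  simp

theorem exists_polynomial_eval_intCast_eq_zpow (K : Type*) [Field K] [CharZero K] {A : Type*}
    [Ring A] (ℓ : A →+ K) (u : Aˣ) (hu : IsNilpotent (u - 1 : A)) :
    ∃ q : K[X], ∀ m : ℤ, q.eval (m : K) = ℓ (u ^ m : Aˣ) := by
  obtain ⟨d, hd⟩ := hu
  choose q hq using exists_polynomial_eval_intCast_eq_choose K
  refine ⟨∑ k ∈ range d, q k * C (ℓ ((u - 1 : A) ^ k)), fun m ↦ ?_⟩
  simp [unit_zpow_eq_sum_choose_smul_sub_one_pow u hd, eval_finsetSum, hq, map_zsmul,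
    -zsmul_eq_mul, zsmul_eq_mul (_ : K)]

end UnipotentPowers

section IncidenceAlgebra

open Finset

variable {𝕜 α : Type*} [Ring 𝕜] [PartialOrder α] [LocallyFiniteOrder α] [DecidableEq α]

theorem incidenceAlgebra_pow_apply_eq_zero_of_card_Ico_lt {f : IncidenceAlgebra 𝕜 α}
    (hf : ∀ a, f a a = 0) {k : ℕ} {a b : α} (hk : #(Ico a b) < k) : (f ^ k) a b = 0 := by
  induction k generalizing b with
  | zero => exact absurd hk (Nat.not_lt_zero _)
  | succ k ih =>
    rw [pow_succ, IncidenceAlgebra.mul_apply]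
    refine sum_eq_zero fun x hx ↦ ?_
    obtain ⟨hax, hxb⟩ := mem_Icc.1 hx
    obtain rfl | hxb := hxb.eq_or_lt
    · rw [hf, mul_zero]
    · have hlt : #(Ico a x) < #(Ico a b) :=
        card_lt_card <| (ssubset_iff_of_subset (Ico_subset_Ico_right hxb.le)).2
          ⟨x, by simp [hax, hxb], by simp⟩
      rw [ih (by lia), zero_mul]

theorem isNilpotent_incidenceAlgebra_of_diag_eq_zero [Finite α] {f : IncidenceAlgebra 𝕜 α}
    (hf : ∀ a, f a a = 0) : IsNilpotent f := by
  have := Fintype.ofFinite α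
  refine ⟨Fintype.card α + 1, IncidenceAlgebra.ext fun a b _ ↦ ?_⟩
  exact incidenceAlgebra_pow_apply_eq_zero_of_card_Ico_lt hf (Nat.lt_succ_of_le (card_le_univ _))

end IncidenceAlgebra

section Levels

open Finset

variable {Q : Type*} [Fintype Q]

/-- The elements on which `φ` takes a value below `k`. -/
def sublevel (φ : Q → ℕ) (k : ℕ) : Finset Q := {x | φ x < k}

theorem mem_sublevel {φ : Q → ℕ} {k : ℕ} {x : Q} : x ∈ sublevel φ k ↔ φ x < k := by
  simp [sublevel]

theorem sublevel_min {φ : Q → ℕ} {k n : ℕ} (hk : k ≤ n) :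
    sublevel (fun x ↦ min (φ x) n) k = sublevel φ k := by
  ext x
  grind [mem_sublevel]

variable [DecidableEq Q]

/-- The maps `φ : Q → {0, …, n}` with `{φ < n} = J`. They encode the maps `J → {0, …, n - 1}`,
extended by the constant value `n` so that maps with different domains have the same type. -/
def mapsOn (n : ℕ) (J : Finset Q) : Finset (Q → ℕ) :=
  {φ ∈ Fintype.piFinset fun _ ↦ range (n + 1) | sublevel φ n = J}

theorem mem_mapsOn {n : ℕ} {J : Finset Q} {φ : Q → ℕ} :
    φ ∈ mapsOn n J ↔ (∀ x, φ x ≤ n) ∧ ∀ x, x ∈ J ↔ φ x < n := by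
  simp [mapsOn, Finset.ext_iff, mem_sublevel, iff_comm]

theorem sublevel_eq_of_mem_mapsOn {n : ℕ} {J : Finset Q} {φ : Q → ℕ} (hφ : φ ∈ mapsOn n J) :
    sublevel φ n = J :=
  (mem_filter.1 hφ).2

theorem sum_mapsOn_add_one {M : Type*} [AddCommMonoid M] (n : ℕ) (J : Finset Q)
    (F : Finset Q → (Q → ℕ) → M) :
    ∑ φ ∈ mapsOn (n + 1) J, F (sublevel φ n) (fun x ↦ min (φ x) n) =
      ∑ I ∈ Icc ∅ J, ∑ ψ ∈ mapsOn n I, F I ψ := by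
  rw [sum_sigma']
  refine sum_bij' (fun φ _ ↦ ⟨sublevel φ n, fun x ↦ min (φ x) n⟩)
    (fun Iψ _ x ↦ if x ∈ J then Iψ.2 x else n + 1) ?_ ?_ ?_ ?_ fun _ _ ↦ rfl
  · intro φ hφ
    rw [mem_mapsOn] at hφ
    simp only [mem_sigma, mem_mapsOn, mem_Icc, mem_sublevel, subset_iff, hφ]
    grind
  · rintro ⟨I, ψ⟩ hψ
    simp only [mem_sigma, mem_mapsOn, mem_Icc, subset_iff] at hψ ⊢
    grind
  · intro φ hφ
    rw [mem_mapsOn] at hφ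
    grind
  · rintro ⟨I, ψ⟩ hψ
    simp only [mem_sigma, mem_mapsOn, mem_Icc, subset_iff] at hψ
    ext
    · grind [mem_sublevel]
    · apply heq_of_eq
      ext
      grind

theorem mapsOn_zero_empty : mapsOn 0 (∅ : Finset Q) = {0} := by
  ext φ
  simp [mem_mapsOn, funext_iff]

theorem mapsOn_zero_of_nonempty {J : Finset Q} (hJ : J.Nonempty) : mapsOn 0 J = ∅ := by
  obtain ⟨x, hx⟩ := hJ
  exact eq_empty_of_forall_notMem fun φ hφ ↦ Nat.not_lt_zero _ (((mem_mapsOn.1 hφ).2 x).1 hx)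

variable {𝕜 : Type*} [CommRing 𝕜]

theorem incidenceAlgebra_pow_apply_eq_sum_mapsOn (f : IncidenceAlgebra 𝕜 (Finset Q)) (n : ℕ)
    (J : Finset Q) :
    (f ^ n) ∅ J = ∑ φ ∈ mapsOn n J, ∏ k ∈ range n, f (sublevel φ k) (sublevel φ (k + 1)) := by
  induction n generalizing J with
  | zero =>
    obtain rfl | hJ := J.eq_empty_or_nonempty
    · simp [mapsOn_zero_empty]
    · simp [mapsOn_zero_of_nonempty hJ, IncidenceAlgebra.one_apply, hJ.ne_empty.symm]
  | succ n ih =>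
    rw [pow_succ, IncidenceAlgebra.mul_apply]
    simp only [ih, sum_mul]
    rw [← sum_mapsOn_add_one n J fun I ψ ↦
      (∏ k ∈ range n, f (sublevel ψ k) (sublevel ψ (k + 1))) * f I J]
    refine sum_congr rfl fun φ hφ ↦ ?_
    rw [prod_range_succ, sublevel_eq_of_mem_mapsOn hφ]
    congr 1
    refine prod_congr rfl fun k hk ↦ ?_
    have hk : k + 1 ≤ n := mem_range.1 hk
    rw [sublevel_min (by lia), sublevel_min hk]

theorem incidenceAlgebra_pow_apply_empty_univ (f : IncidenceAlgebra 𝕜 (Finset Q)) (n : ℕ) :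
    (f ^ n) ∅ univ = ∑ φ : Q → Fin n, ∏ k, f {x | φ x < k} {x | φ x ≤ k} := by
  rw [incidenceAlgebra_pow_apply_eq_sum_mapsOn]
  symm
  refine sum_bij (fun φ _ x ↦ (φ x : ℕ)) ?_ ?_ ?_ ?_
  · intro φ _
    exact mem_mapsOn.2 ⟨fun x ↦ (φ x).2.le, fun x ↦ by simp⟩
  · intro φ _ ψ _ h
    ext x
    exact congrFun h x
  · intro φ hφ
    have hφ (x : Q) : φ x < n := ((mem_mapsOn.1 hφ).2 x).1 (mem_univ x)
    exact ⟨fun x ↦ ⟨φ x, hφ x⟩, mem_univ _, rfl⟩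
  · intro φ _
    rw [prod_range]
    refine prod_congr rfl fun k _ ↦ congrArg₂ f ?_ ?_ <;>
      ext x <;> simp [mem_sublevel, Order.lt_add_one_iff]

end Levels

section StepIncidence

open Finset

variable {Q : Type*} [DecidableEq Q]

open Classical in
/-- The weighted incidence relation of a relation `R` between subsets of `Q`, as an element of the
incidence algebra of the Boolean lattice: an interval `S ⊆ T` satisfying `R S T` gets the weight
`c ^ #(T \ S)`. -/
noncomputable def stepIncidence {𝕜 : Type*} [MonoidWithZero 𝕜] (c : 𝕜)
    (R : Finset Q → Finset Q → Prop) : IncidenceAlgebra 𝕜 (Finset Q) where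
  toFun S T := if S ⊆ T ∧ R S T then c ^ #(T \ S) else 0
  eq_zero_of_not_le' _ _ h := if_neg fun h' ↦ h h'.1

open Classical in
theorem stepIncidence_apply_of_subset {𝕜 : Type*} [MonoidWithZero 𝕜] (c : 𝕜)
    (R : Finset Q → Finset Q → Prop) {S T : Finset Q} (h : S ⊆ T) :
    stepIncidence c R S T = if R S T then c ^ #(T \ S) else 0 := by
  simp [stepIncidence, h]

/-- `T` arises from `S` by adding elements all of whose `r`-predecessors lie in `T`: the condition
on consecutive sublevel sets of a map which is weakly monotone along `r`. -/
def IsWeakStep (r : Q → Q → Prop) (S T : Finset Q) : Prop :=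
  ∀ y ∈ T \ S, ∀ x, r x y → x ∈ T

/-- `T` arises from `S` by adding elements all of whose `r`-predecessors lie in `S`: the condition
on consecutive sublevel sets of a map which is strictly monotone along `r`. -/
def IsStrictStep (r : Q → Q → Prop) (S T : Finset Q) : Prop :=
  ∀ y ∈ T \ S, ∀ x, r x y → x ∈ S

section Count

variable [Fintype Q]

theorem sum_card_level_sdiff {n : ℕ} (φ : Q → Fin n) :
    ∑ k, #(univ.filter (φ · ≤ k) \ univ.filter (φ · < k)) = Fintype.card Q := by
  have h (k : Fin n) : univ.filter (φ · ≤ k) \ univ.filter (φ · < k) =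
      univ.filter (φ · = k) := by
    ext x
    grind
  simp only [h]
  exact (card_eq_sum_card_fiberwise fun _ _ ↦ mem_coe.2 (mem_univ _)).symm

theorem stepIncidence_pow_apply_empty_univ {𝕜 : Type*} [CommRing 𝕜] (c : 𝕜)
    (R : Finset Q → Finset Q → Prop) (n : ℕ) :
    (stepIncidence c R ^ n) ∅ univ = c ^ Fintype.card Q *
      Nat.card {φ : Q → Fin n // ∀ k, R {x | φ x < k} {x | φ x ≤ k}} := by
  classical
  have hsub (φ : Q → Fin n) (k : Fin n) : univ.filter (φ · < k) ⊆ univ.filter (φ · ≤ k) :=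
    monotone_filter_right _ fun _ _ ↦ le_of_lt
  simp only [incidenceAlgebra_pow_apply_empty_univ, stepIncidence_apply_of_subset _ _ (hsub _ _),
    Fintype.prod_ite_zero, prod_pow_eq_pow_sum, sum_card_level_sdiff]
  rw [Nat.card_eq_fintype_card, Fintype.card_subtype, sum_ite, sum_const_zero, add_zero, sum_const,
    nsmul_eq_mul, mul_comm]

theorem forall_isStrictStep_iff {r : Q → Q → Prop} {n : ℕ} {φ : Q → Fin n} :
    (∀ k, IsStrictStep r {x | φ x < k} {x | φ x ≤ k}) ↔ ∀ x y, r x y → φ x < φ y := by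
  simp only [IsStrictStep, mem_sdiff, mem_filter_univ]
  grind

theorem forall_isWeakStep_iff {r : Q → Q → Prop} {n : ℕ} {φ : Q → Fin n} :
    (∀ k, IsWeakStep r {x | φ x < k} {x | φ x ≤ k}) ↔ ∀ x y, r x y → φ x ≤ φ y := by
  simp only [IsWeakStep, mem_sdiff, mem_filter_univ]
  grind

end Count

section Inversion

theorem sum_Icc_neg_one_pow_card_sdiff (𝕜 : Type*) [Ring 𝕜] (A J : Finset Q) :
    ∑ K ∈ Icc A J, (-1 : 𝕜) ^ #(J \ K) = if A = J then 1 else 0 := by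
  by_cases hAJ : A ⊆ J
  · have h : ∑ K ∈ Icc A J, (-1 : ℤ) ^ #(J \ K) = ∑ K ∈ (J \ A).powerset, (-1 : ℤ) ^ #K := by
      refine sum_bij' (fun K _ ↦ J \ K) (fun K _ ↦ J \ K) ?_ ?_ ?_ ?_ fun _ _ ↦ rfl <;>
        intro K hK <;> simp only [mem_Icc, mem_powerset] at hK ⊢ <;> grind
    have hA : J \ A = ∅ ↔ A = J := by
      rw [sdiff_eq_empty_iff_subset]
      exact ⟨hAJ.antisymm, fun h ↦ h.ge⟩
    rw [sum_powerset_neg_one_pow_card] at h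
    simpa [hA] using congrArg (Int.cast : ℤ → 𝕜) h
  · rw [Icc_eq_empty hAJ, sum_empty, if_neg fun h ↦ hAJ h.le]

theorem eq_of_forall_rel_mem {r : Q → Q → Prop} (hr : WellFounded (Function.swap r))
    {I J : Finset Q} (hIJ : I ⊆ J) (h : ∀ x ∈ J \ I, ∃ y ∈ J \ I, r x y) : I = J := by
  by_contra hne
  obtain ⟨x, hx, hmax⟩ := hr.has_min (J \ I : Finset Q) <|
    coe_nonempty.2 <| sdiff_nonempty.2 fun hJI ↦ hne (hIJ.antisymm hJI)
  obtain ⟨y, hy, hxy⟩ := h x hx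
  exact hmax y hy hxy

theorem stepIncidence_isWeakStep_mul_isStrictStep [Finite Q] {𝕜 : Type*} [Ring 𝕜]
    {r : Q → Q → Prop} (hr : WellFounded (Function.swap r)) :
    stepIncidence (1 : 𝕜) (IsWeakStep r) * stepIncidence (-1) (IsStrictStep r) = 1 := by
  classical
  have := Fintype.ofFinite Q
  ext I J hIJ
  set A := I ∪ univ.filter fun x ↦ ∃ y ∈ J \ I, r x y with hA
  have hsteps {K : Finset Q} (hK : K ∈ Icc I J) :
      IsWeakStep r I K ∧ IsStrictStep r K J ↔ A ⊆ K := by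
    simp only [IsWeakStep, IsStrictStep, hA, mem_Icc, union_subset_iff] at hK ⊢
    grind
  have hfilter : {K ∈ Icc I J | IsWeakStep r I K ∧ IsStrictStep r K J} = Icc A J := by
    rw [filter_congr fun K hK ↦ hsteps hK]
    ext K
    have hIA : I ⊆ A := subset_union_left
    simp only [mem_filter, mem_Icc]
    grind
  have hAJ : A = J ↔ I = J := by
    refine ⟨fun h ↦ eq_of_forall_rel_mem hr hIJ fun x hx ↦ ?_, fun h ↦ by simp [hA, h]⟩
    grind
  rw [IncidenceAlgebra.mul_apply, IncidenceAlgebra.one_apply]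
  calc ∑ K ∈ Icc I J, stepIncidence (1 : 𝕜) (IsWeakStep r) I K *
        stepIncidence (-1) (IsStrictStep r) K J
      = ∑ K ∈ Icc I J, if IsWeakStep r I K ∧ IsStrictStep r K J then (-1) ^ #(J \ K) else 0 := by
        refine sum_congr rfl fun K hK ↦ ?_
        obtain ⟨hIK, hKJ⟩ := mem_Icc.1 hK
        rw [stepIncidence_apply_of_subset _ _ hIK, stepIncidence_apply_of_subset _ _ hKJ, one_pow,
          ite_zero_mul_ite_zero, one_mul]
    _ = ∑ K ∈ Icc A J, (-1) ^ #(J \ K) := by rw [← sum_filter, hfilter]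
    _ = if I = J then 1 else 0 := by rw [sum_Icc_neg_one_pow_card_sdiff, if_congr hAJ rfl rfl]

theorem isNilpotent_stepIncidence_isStrictStep_sub_one [Finite Q] {𝕜 : Type*} [Ring 𝕜] (c : 𝕜)
    (r : Q → Q → Prop) : IsNilpotent (stepIncidence c (IsStrictStep r) - 1) :=
  isNilpotent_incidenceAlgebra_of_diag_eq_zero fun S ↦ by
    simp [stepIncidence_apply_of_subset _ _ (Subset.refl S), IsStrictStep]

end Inversion

end StepIncidence

section Reciprocity

open Finset Polynomial

theorem exists_polynomial_eval_card_strict_weak (K : Type*) [Field K] [CharZero K] {Q : Type*}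
    [Fintype Q] {r : Q → Q → Prop} (hr : WellFounded (Function.swap r)) :
    ∃ f : K[X], ∀ n : ℕ,
      f.eval (n : K) = Nat.card {φ : Q → Fin n // ∀ x y, r x y → φ x < φ y} ∧
      f.eval (-n : K) =
        (-1) ^ Fintype.card Q * Nat.card {φ : Q → Fin n // ∀ x y, r x y → φ x ≤ φ y} := by
  classical
  have hnil := isNilpotent_stepIncidence_isStrictStep_sub_one (-1 : K) r
  obtain ⟨u, hu⟩ : IsUnit (stepIncidence (-1 : K) (IsStrictStep r)) := by
    simpa using hnil.isUnit_one_add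
  have hinv : (↑u⁻¹ : IncidenceAlgebra K (Finset Q)) = stepIncidence 1 (IsWeakStep r) :=
    Units.inv_eq_of_mul_eq_one_left (hu ▸ stepIncidence_isWeakStep_mul_isStrictStep hr)
  let ℓ : IncidenceAlgebra K (Finset Q) →+ K :=
    { toFun f := f ∅ univ, map_zero' := rfl, map_add' _ _ := rfl }
  obtain ⟨q, hq⟩ := exists_polynomial_eval_intCast_eq_zpow K ℓ u (hu ▸ hnil)
  refine ⟨C ((-1) ^ Fintype.card Q) * q, fun n ↦ ⟨?_, ?_⟩⟩
  · have h : q.eval (n : K) = (stepIncidence (-1 : K) (IsStrictStep r) ^ n) ∅ univ := by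
      simpa [hu, ℓ] using hq n
    rw [eval_mul, eval_C, h, stepIncidence_pow_apply_empty_univ, ← mul_assoc, ← mul_pow]
    simp [forall_isStrictStep_iff]
  · have h : q.eval (-n : K) = (stepIncidence (1 : K) (IsWeakStep r) ^ n) ∅ univ := by
      simpa [← inv_pow, hinv, ℓ] using hq (-n)
    rw [eval_mul, eval_C, h, stepIncidence_pow_apply_empty_univ, one_pow, one_mul]
    simp only [forall_isWeakStep_iff]

end Reciprocity

section CycleCount

open Equiv Equiv.Perm Finset

variable {P : Type*} [Fintype P] [DecidableEq P]

/-- The orbit of `x` under `σ`, recorded as the nontrivial cycle of `σ` through `x`, or as `x`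
itself if `σ` fixes `x`. -/
def cycleOrFixedPoint (σ : Perm P) (x : P) : Perm P ⊕ P :=
  if σ x = x then .inr x else .inl (σ.cycleOf x)

theorem cycleOrFixedPoint_eq_iff {σ : Perm P} {x y : P} :
    cycleOrFixedPoint σ x = cycleOrFixedPoint σ y ↔ σ.SameCycle x y := by
  by_cases hx : σ x = x
  · have hxy : σ.SameCycle x y ↔ x = y :=
      ⟨fun ⟨k, hk⟩ ↦ by rwa [zpow_apply_eq_self_of_apply_eq_self hx] at hk, by rintro rfl; rfl⟩
    rw [hxy]
    grind [cycleOrFixedPoint]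
  · by_cases hy : σ y = y
    · have hxy : ¬σ.SameCycle x y := fun h ↦ hx (h.apply_eq_self_iff.2 hy)
      simp [cycleOrFixedPoint, hx, hy, hxy]
    · simp [cycleOrFixedPoint, hx, hy,
        sameCycle_iff_cycleOf_eq_of_mem_support (mem_support.2 hx) (mem_support.2 hy)]

theorem image_cycleOrFixedPoint (σ : Perm P) :
    univ.image (cycleOrFixedPoint σ) = σ.cycleFactorsFinset.disjSum σ.supportᶜ := by
  ext (c | x)
  · simp only [mem_image, mem_univ, true_and, inl_mem_disjSum, cycleOrFixedPoint]
    constructor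
    · grind [cycleOf_mem_cycleFactorsFinset_iff, mem_support]
    · intro hc
      obtain ⟨x, hx⟩ := (mem_cycleFactorsFinset_iff.1 hc).1.nonempty_support
      have hσx : σ x ≠ x := mem_support.1 (mem_cycleFactorsFinset_support_le hc hx)
      exact ⟨x, by rw [if_neg hσx, cycle_is_cycleOf hx hc]⟩
  · simp only [mem_image, mem_univ, true_and, inr_mem_disjSum, mem_compl, mem_support, not_not,
      cycleOrFixedPoint]
    grind

theorem card_quotient_sameCycle (σ : Perm P) :
    Nat.card (Quotient (SameCycle.setoid σ)) = #σ.cycleFactorsFinset + #σ.supportᶜ := by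
  have hker : SameCycle.setoid σ = Setoid.ker (cycleOrFixedPoint σ) :=
    Setoid.ext fun _ _ ↦ cycleOrFixedPoint_eq_iff.symm
  rw [hker, Nat.card_congr (Setoid.quotientKerEquivRange _), ← card_disjSum,
    ← image_cycleOrFixedPoint, Nat.card_coe_set_eq, ← Set.image_univ, ← coe_univ, ← coe_image,
    Set.ncard_coe_finset]

theorem sign_eq_neg_one_pow_card_add_card_quotient_sameCycle (σ : Perm P) :
    sign σ = (-1) ^ (Fintype.card P + Nat.card (Quotient (SameCycle.setoid σ))) := by
  have hcard : Fintype.card P + Nat.card (Quotient (SameCycle.setoid σ)) =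
      #σ.support + #σ.cycleFactorsFinset + 2 * #σ.supportᶜ := by
    rw [card_quotient_sameCycle, ← card_compl_add_card σ.support]
    lia
  rw [sign_of_cycleType, sum_cycleType, cycleType_def, Multiset.card_map, card_val, hcard,
    pow_add _ _ (2 * _), pow_mul, Int.units_sq, one_pow, mul_one]

end CycleCount

section InvariantMaps

open Equiv Equiv.Perm Polynomial

variable {P : Type*}

theorem sameCycle_setoid_le_ker_iff [Finite P] {σ : Perm P} {β : Type*} {φ : P → β} :
    SameCycle.setoid σ ≤ Setoid.ker φ ↔ ∀ x, φ (σ x) = φ x := by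
  refine ⟨fun h x ↦ h (sameCycle_apply_left.2 (SameCycle.refl σ x)), fun h x y hxy ↦ ?_⟩
  obtain ⟨k, rfl⟩ := SameCycle.exists_nat_pow_eq hxy
  have hφ : Function.Semiconj φ σ id := h
  simpa [Setoid.ker_def, ← iterate_eq_pow] using (hφ.iterate_right k x).symm

variable [Preorder P]

/-- The relation which the strict order of `P` induces between the orbits of `σ`. -/
def cycleRel (σ : Perm P) : Quotient (SameCycle.setoid σ) → Quotient (SameCycle.setoid σ) → Prop :=
  Relation.Map (· < ·) Quotient.mk'' Quotient.mk''

variable [Finite P] {σ : Perm P}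

theorem wellFounded_swap_cycleRel (hσ : StrictMono σ) :
    WellFounded (Function.swap (cycleRel σ)) := by
  -- The number of elements above `x` is constant on the orbits of `σ` and decreases along `<`.
  have hle (x : P) : (Set.Ioi x).ncard ≤ (Set.Ioi (σ x)).ncard :=
    Set.ncard_le_ncard_of_injOn σ (fun y hy ↦ hσ hy) σ.injective.injOn
  have hpow (x : P) (k : ℕ) : (Set.Ioi x).ncard ≤ (Set.Ioi ((σ ^ k) x)).ncard := by
    induction k with
    | zero => rfl
    | succ k ih => exact ih.trans (by simpa [pow_succ'] using hle ((σ ^ k) x))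
  have hcycle {x y : P} (h : σ.SameCycle x y) : (Set.Ioi x).ncard ≤ (Set.Ioi y).ncard := by
    obtain ⟨k, rfl⟩ := h.exists_nat_pow_eq
    exact hpow x k
  let ρ : Quotient (SameCycle.setoid σ) → ℕ :=
    Quotient.lift (fun x ↦ (Set.Ioi x).ncard) fun _ _ h ↦
      (hcycle h).antisymm (hcycle (SameCycle.symm h))
  refine Subrelation.wf ?_ (measure ρ).wf
  rintro _ _ ⟨x, y, hxy, rfl, rfl⟩
  exact Set.ncard_lt_ncard (Set.Ioi_ssubset_Ioi hxy)

theorem card_invariant_maps_eq_card_maps_quotient {β : Type*} (s : β → β → Prop) :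
    Nat.card {φ : P → β // (∀ x y, x < y → s (φ x) (φ y)) ∧ ∀ x, φ (σ x) = φ x} =
      Nat.card {ψ : Quotient (SameCycle.setoid σ) → β //
        ∀ a b, cycleRel σ a b → s (ψ a) (ψ b)} := by
  refine Nat.card_congr
    { toFun φ := ⟨Quotient.lift φ.1 fun _ _ h ↦ sameCycle_setoid_le_ker_iff.2 φ.2.2 h, ?_⟩
      invFun ψ := ⟨fun x ↦ ψ.1 ⟦x⟧, fun x y hxy ↦ ψ.2 _ _ ⟨x, y, hxy, rfl, rfl⟩, ?_⟩
      left_inv _ := rfl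
      right_inv ψ := Subtype.ext <| funext <| Quotient.ind fun _ ↦ rfl }
  · rintro _ _ ⟨x, y, hxy, rfl, rfl⟩
    exact φ.2.1 x y hxy
  · exact sameCycle_setoid_le_ker_iff.1 fun x y h ↦ congrArg ψ.1 (Quotient.sound h)

end InvariantMaps

section InvariantReciprocity

open Equiv Equiv.Perm Polynomial

theorem exists_polynomial_eval_card_invariant_strict_weak (K : Type*) [Field K] [CharZero K]
    {P : Type*} [Preorder P] [Fintype P] [DecidableEq P] {σ : Perm P} (hσ : StrictMono σ) :
    ∃ f : K[X], ∀ n : ℕ,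
      f.eval (n : K) =
        Nat.card {φ : P → Fin n // (∀ x y, x < y → φ x < φ y) ∧ ∀ x, φ (σ x) = φ x} ∧
      f.eval (-n : K) = (-1) ^ Fintype.card P * (sign σ : ℤ) *
        Nat.card {φ : P → Fin n // (∀ x y, x < y → φ x ≤ φ y) ∧ ∀ x, φ (σ x) = φ x} := by
  have := Fintype.ofFinite (Quotient (SameCycle.setoid σ))
  obtain ⟨f, hf⟩ := exists_polynomial_eval_card_strict_weak K (wellFounded_swap_cycleRel hσ)
  have hsign : (-1 : K) ^ Fintype.card P * (sign σ : ℤ) =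
      (-1) ^ Fintype.card (Quotient (SameCycle.setoid σ)) := by
    rw [sign_eq_neg_one_pow_card_add_card_quotient_sameCycle, Nat.card_eq_fintype_card]
    push_cast
    rw [pow_add, ← mul_assoc, ← mul_pow, neg_one_mul, neg_neg, one_pow, one_mul]
  refine ⟨f, fun n ↦ ?_⟩
  rw [hsign, card_invariant_maps_eq_card_maps_quotient (· < ·),
    card_invariant_maps_eq_card_maps_quotient (· ≤ ·)]
  exact hf n

end InvariantReciprocity

section SignedBurnside

open MulAction

variable {G X : Type*} [Group G] [MulAction G X]

theorem card_orbits_eq_card_quot {S : Type*} (e : X ≃ S)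
    {r : S → S → Prop} (hr : ∀ a b, r (e a) (e b) ↔ ∃ g : G, b = g • a) :
    Nat.card (orbitRel.Quotient G X) = Nat.card (Quot r) := by
  refine Nat.card_congr (Quot.congr e fun a b ↦ ?_)
  rw [hr, Setoid.comm', orbitRel_apply, mem_orbit_iff]
  simp only [eq_comm]

variable (X) in
/-- The points of a `G`-set whose stabilizers lie in the kernel of the character `χ`. For the sign
character these are the even points. -/
def evenPoints {M : Type*} [CommMonoid M] (χ : G →* M) : SubMulAction G X where
  carrier := {x | ∀ h ∈ stabilizer G x, χ h = 1}
  smul_mem' g x hx h hh := by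
    have hconj : g⁻¹ * h * g ∈ stabilizer G x := by
      rw [mem_stabilizer_iff, mul_smul, mul_smul, mem_stabilizer_iff.1 hh, inv_smul_smul]
    have hinv : χ g⁻¹ * χ g = 1 := by rw [← map_mul, inv_mul_cancel, map_one]
    simpa [mul_right_comm, hinv] using hx _ hconj

theorem mem_evenPoints {M : Type*} [CommMonoid M] {χ : G →* M} {x : X} :
    x ∈ evenPoints X χ ↔ ∀ h : G, h • x = x → χ h = 1 :=
  Iff.rfl

variable [Fintype G]

open Classical in
theorem sum_character_stabilizer_eq_ite {R : Type*} [CommRing R] [IsDomain R] (χ : G →* R) (x : X) :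
    ∑ g : stabilizer G x, χ g =
      if x ∈ evenPoints X χ then (Nat.card (stabilizer G x) : R) else 0 := by
  have h : χ.comp (stabilizer G x).subtype = 1 ↔ x ∈ evenPoints X χ := by
    simp [DFunLike.ext_iff, mem_evenPoints]
  have := sum_hom_units (χ.comp (stabilizer G x).subtype)
  simpa [h, Nat.card_eq_fintype_card] using this

open Classical in
theorem sum_mul_card_fixedBy_eq_sum_sum_stabilizer [Fintype X] {R : Type*} [CommSemiring R]
    (f : G → R) :
    ∑ g, f g * Nat.card (fixedBy X g) = ∑ x : X, ∑ g : stabilizer G x, f g := by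
  have hleft (g : G) : f g * Nat.card (fixedBy X g) = ∑ x : X, if g • x = x then f g else 0 := by
    rw [← Finset.sum_filter, Finset.sum_const, nsmul_eq_mul, mul_comm, Nat.card_eq_fintype_card,
      ← Fintype.card_subtype]
    rfl
  have hright (x : X) : ∑ g : stabilizer G x, f g = ∑ g, if g • x = x then f g else 0 := by
    rw [← Finset.sum_filter]
    exact (Finset.sum_subtype _ (by simp) f).symm
  simp only [hleft, hright]
  exact Finset.sum_comm

theorem sum_card_fixedBy_eq_card_orbits_mul [Finite X] :
    ∑ g : G, Nat.card (fixedBy X g) = Nat.card (orbitRel.Quotient G X) * Nat.card G := by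
  classical
  have := Fintype.ofFinite X
  have := Fintype.ofFinite (orbitRel.Quotient G X)
  simpa only [Nat.card_eq_fintype_card] using sum_card_fixedBy_eq_card_orbits_mul_card_group G X

theorem sum_character_mul_card_fixedBy_eq_card_orbits_evenPoints_mul [Finite X] {R : Type*}
    [CommRing R] [IsDomain R] (χ : G →* R) :
    ∑ g, χ g * Nat.card (fixedBy X g) =
      Nat.card (orbitRel.Quotient G (evenPoints X χ)) * Nat.card G := by
  classical
  have := Fintype.ofFinite X
  have hstab (y : evenPoints X χ) : stabilizer G y = stabilizer G (y : X) :=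
    SubMulAction.stabilizer_of_subMul y
  calc ∑ g, χ g * Nat.card (fixedBy X g)
      = ∑ x : X, if x ∈ evenPoints X χ then (Nat.card (stabilizer G x) : R) else 0 := by
        simp only [sum_mul_card_fixedBy_eq_sum_sum_stabilizer, sum_character_stabilizer_eq_ite]
    _ = ∑ y : evenPoints X χ, (Nat.card (stabilizer G y) : R) := by
        rw [← Finset.sum_filter]
        simp only [hstab]
        exact Finset.sum_subtype _ (by simp) fun x ↦ (Nat.card (stabilizer G x) : R)
    _ = ∑ g : G, (Nat.card (fixedBy (evenPoints X χ) g) : R) := by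
        simpa using (sum_mul_card_fixedBy_eq_sum_sum_stabilizer (X := evenPoints X χ)
          fun _ : G ↦ (1 : R)).symm
    _ = Nat.card (orbitRel.Quotient G (evenPoints X χ)) * Nat.card G := by
        rw [← Nat.cast_sum, sum_card_fixedBy_eq_card_orbits_mul, Nat.cast_mul]

end SignedBurnside

section OrbitReciprocity

open Equiv Equiv.Perm MulAction Polynomial

attribute [local instance] arrowAction

variable {G P : Type*} [Group G] [MulAction G P]

theorem smul_eq_self_iff_forall_apply_smul_eq {β : Type*} {g : G} {φ : P → β} :
    g • φ = φ ↔ ∀ x, φ (g • x) = φ x := by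
  rw [smul_eq_iff_eq_inv_smul, funext_iff]
  change (∀ x, φ x = φ (g⁻¹⁻¹ • x)) ↔ _
  simp only [inv_inv, eq_comm]

/-- The character `g ↦ sgn(g)` of a permutation action, with values in `ℤ`. -/
def signCharacter (G P : Type*) [Group G] [MulAction G P] [Fintype P] [DecidableEq P] : G →* ℤ :=
  (Units.coeHom ℤ).comp (sign.comp (toPermHom G P))

theorem signCharacter_apply [Fintype P] [DecidableEq P] (g : G) :
    signCharacter G P g = sign (toPerm g : Perm P) :=
  rfl

variable [Preorder P]

/-- The `G`-set of maps `φ : P → β` such that `s (φ x) (φ y)` whenever `x < y`. With `s` the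
relation `<` or `≤` on `Fin n`, these are the strictly or weakly order preserving maps. -/
def relMaps (hG : ∀ g : G, StrictMono (g • · : P → P)) {β : Type*} (s : β → β → Prop) :
    SubMulAction G (P → β) where
  carrier := {φ | ∀ x y, x < y → s (φ x) (φ y)}
  smul_mem' g _ hφ _ _ hxy := hφ _ _ (hG g⁻¹ hxy)

variable (hG : ∀ g : G, StrictMono (g • · : P → P)) {β : Type*} (s : β → β → Prop)

theorem card_fixedBy_relMaps (g : G) :
    Nat.card (fixedBy (relMaps hG s) g) =
      Nat.card {φ : P → β // (∀ x y, x < y → s (φ x) (φ y)) ∧ ∀ x, φ (toPerm g x) = φ x} := by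
  have hfix (φ : relMaps hG s) :
      φ ∈ fixedBy (relMaps hG s) g ↔ ∀ x, φ.1 (toPerm g x) = φ.1 x := by
    rw [mem_fixedBy, Subtype.ext_iff]
    exact smul_eq_self_iff_forall_apply_smul_eq
  exact Nat.card_congr <| (Equiv.subtypeEquivRight hfix).trans <|
    Equiv.subtypeSubtypeEquivSubtypeInter _ fun φ : P → β ↦ ∀ x, φ (toPerm g x) = φ x

theorem card_orbits_relMaps :
    Nat.card (orbitRel.Quotient G (relMaps hG s)) =
      Nat.card (Quot fun φ ψ : {φ : P → β // ∀ x y, x < y → s (φ x) (φ y)} ↦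
        ∃ g : G, ∀ x, ψ.1 x = φ.1 (g⁻¹ • x)) :=
  card_orbits_eq_card_quot (Equiv.refl _) fun φ ψ ↦ by
    simp only [Subtype.ext_iff, funext_iff]
    rfl

variable [Fintype P] [DecidableEq P]

theorem card_orbits_evenPoints_relMaps :
    Nat.card (orbitRel.Quotient G (evenPoints (relMaps hG s) (signCharacter G P))) =
      Nat.card (Quot fun φ ψ : {φ : P → β // (∀ x y, x < y → s (φ x) (φ y)) ∧
          ∀ g : G, (∀ x, φ (g⁻¹ • x) = φ x) → sign (toPerm g : Perm P) = 1} ↦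
        ∃ g : G, ∀ x, ψ.1 x = φ.1 (g⁻¹ • x)) := by
  have heven (φ : relMaps hG s) :
      φ ∈ evenPoints (relMaps hG s) (signCharacter G P) ↔
        ∀ g : G, (∀ x, φ.1 (g⁻¹ • x) = φ.1 x) → sign (toPerm g : Perm P) = 1 := by
    simp only [mem_evenPoints, signCharacter_apply, Units.val_eq_one, Subtype.ext_iff, funext_iff]
    rfl
  refine card_orbits_eq_card_quot ((Equiv.subtypeEquivRight heven).trans <|
    Equiv.subtypeSubtypeEquivSubtypeInter _ fun φ : P → β ↦
      ∀ g : G, (∀ x, φ (g⁻¹ • x) = φ x) → sign (toPerm g : Perm P) = 1) fun φ ψ ↦ ?_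
  simp only [Subtype.ext_iff, funext_iff]
  rfl

theorem exists_polynomial_eval_card_orbits_strict_even_weak (K : Type*) [Field K] [CharZero K]
    [Finite G] :
    ∃ f : K[X], ∀ n : ℕ,
      f.eval (n : K) =
        Nat.card (orbitRel.Quotient G (relMaps hG (· < · : Fin n → Fin n → Prop))) ∧
      f.eval (-n : K) = (-1) ^ Fintype.card P *
        Nat.card (orbitRel.Quotient G
          (evenPoints (relMaps hG (· ≤ · : Fin n → Fin n → Prop)) (signCharacter G P))) := by
  have := Fintype.ofFinite G
  have hG₀ : (Nat.card G : K) ≠ 0 := mod_cast Nat.card_pos.ne'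
  choose q hq using fun g : G ↦
    exists_polynomial_eval_card_invariant_strict_weak K (σ := toPerm g) (hG g)
  refine ⟨C (Nat.card G : K)⁻¹ * ∑ g, q g, fun n ↦ ⟨?_, ?_⟩⟩ <;>
    rw [eval_mul, eval_C, eval_finsetSum, inv_mul_eq_iff_eq_mul₀ hG₀]
  · simp only [(hq _ n).1, ← card_fixedBy_relMaps hG (· < ·)]
    rw [mul_comm]
    exact_mod_cast sum_card_fixedBy_eq_card_orbits_mul
  · have h := congrArg (Int.cast : ℤ → K) <|
      sum_character_mul_card_fixedBy_eq_card_orbits_evenPoints_mul (signCharacter G P)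
        (X := relMaps hG (· ≤ · : Fin n → Fin n → Prop))
    push_cast at h
    simp only [(hq _ n).2, mul_assoc, ← Finset.mul_sum, ← card_fixedBy_relMaps hG (· ≤ ·),
      ← signCharacter_apply, h]
    ring

end OrbitReciprocity

/-- Let `P` be a finite poset and `G` a finite group acting on `P` by
automorphisms, and let `p` be the polynomial with `p(n) = |Hom°(P,[n])/G|` for all
integers `n ≥ 1`.  Then for all integers `n ≥ 1` we have
`p(-n) = (-1)^{|P|} · |Hom₊(P,[n])/G|`, the number of `G`-orbits of even order
preserving maps `P → [n]`, up to sign.  (A map `φ` is even if every `g ∈ G` fixing `φ`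
has sign `+1` as a permutation of `P`.) -/
theorem stmt_10 {P G : Type*} [PartialOrder P] [Fintype P] [DecidableEq P]
    [Group G] [Fintype G] [MulAction G P]
    (hact : ∀ (g : G) (p q : P), p < q → g • p < g • q)
    (p : Polynomial ℚ)
    (hp : ∀ n : ℕ, 1 ≤ n →
      p.eval (n : ℚ) =
        Nat.card (Quot (fun φ ψ : {φ : P → Fin n // ∀ p q : P, p < q → φ p < φ q} =>
          ∃ g : G, ∀ x : P, ψ.1 x = φ.1 (g⁻¹ • x))))
    (n : ℕ) (hn : 1 ≤ n) :
    p.eval (-(n : ℚ)) = (-1) ^ (Fintype.card P) *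
      Nat.card (Quot (fun φ ψ : {φ : P → Fin n //
          (∀ p q : P, p < q → φ p ≤ φ q) ∧
          ∀ g : G, (∀ x : P, φ (g⁻¹ • x) = φ x) →
            Equiv.Perm.sign (MulAction.toPerm g : Equiv.Perm P) = 1} =>
        ∃ g : G, ∀ x : P, ψ.1 x = φ.1 (g⁻¹ • x))) := by
  have hG (g : G) : StrictMono (g • · : P → P) := fun x y ↦ hact g x y
  obtain ⟨f, hf⟩ := exists_polynomial_eval_card_orbits_strict_even_weak hG ℚ
  have hpf : p = f := polynomial_eq_of_forall_eval_natCast_eq fun k hk ↦ by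
    rw [hp k hk, (hf k).1, card_orbits_relMaps]
  rw [hpf, (hf n).2, card_orbits_evenPoints_relMaps]
end

section
/- Let Γ be a finite simple graph, G a finite group acting on Γ by automorphisms, g ∈ G, and n ≥ 1. Then the number of weakly compatible pairs (c,σ) of an n-coloring c and an acyclic orientation σ that are fixed by g satisfies |Σ_n(Γ)^g| = Σ_{σ∈Σ^g} |Hom(Γ^σ,[n])^g|, where the sum ranges over acyclic orientations σ fixed by g and Hom(Γ^σ,[n])^g is the set of g-fixed order preserving maps from the poset Γ^σ to [n]. -/
/-- An orientation of a simple graph `Γ`: an assignment of a head vertex to every edge,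
which is a vertex of that edge. -/
def GraphOri {V : Type*} (Γ : SimpleGraph V) : Type _ :=
  {σ : Γ.edgeSet → V // ∀ e : Γ.edgeSet, σ e ∈ (e : Sym2 V)}

/-- The directed adjacency relation induced by an orientation: `u → v` iff `uv` is an
edge with head `v`. -/
def dirAdj {V : Type*} (Γ : SimpleGraph V) (σ : GraphOri Γ) (u v : V) : Prop :=
  ∃ h : Γ.Adj u v, σ.1 ⟨s(u, v), Γ.mem_edgeSet.mpr h⟩ = v

/-- An orientation is acyclic if it has no directed cycles, i.e. no vertex admits a
nonempty directed path back to itself. -/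
def oriAcyclic {V : Type*} (Γ : SimpleGraph V) (σ : GraphOri Γ) : Prop :=
  ∀ v : V, ¬ Relation.TransGen (dirAdj Γ σ) v v

/-- `oriSMulEq Γ hact g σ σ'` says that `σ' = g • σ`, where `(g • σ)(uv) = g • σ(g⁻¹ • uv)`.
In particular `oriSMulEq Γ hact g σ σ` says that `σ` is fixed by `g`. -/
def oriSMulEq {V G : Type*} [Group G] [MulAction G V] (Γ : SimpleGraph V)
    (hact : ∀ (g : G) (u v : V), Γ.Adj u v → Γ.Adj (g • u) (g • v))
    (g : G) (σ σ' : GraphOri Γ) : Prop :=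
  ∀ (u v : V) (h : Γ.Adj u v),
    σ'.1 ⟨s(u, v), Γ.mem_edgeSet.mpr h⟩ =
      g • σ.1 ⟨s(g⁻¹ • u, g⁻¹ • v), Γ.mem_edgeSet.mpr (hact g⁻¹ u v h)⟩

/-- A coloring `c` and an orientation `σ` are weakly compatible if every edge `uv` with
`c(u) < c(v)` is oriented towards `v`. -/
def weakCompat {V : Type*} (Γ : SimpleGraph V) {n : ℕ} (c : V → Fin n)
    (σ : GraphOri Γ) : Prop :=
  ∀ (u v : V) (h : Γ.Adj u v), c u < c v → σ.1 ⟨s(u, v), Γ.mem_edgeSet.mpr h⟩ = v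

/- quotient poset relation for Γ^σ_g -/
def quotDirRel {V G : Type*} [Group G] [MulAction G V] (Γ : SimpleGraph V)
    (g : G) (σ : GraphOri Γ)
    (a b : Quotient (MulAction.orbitRel (Subgroup.zpowers g) V)) : Prop :=
  ∃ u v : V, Quotient.mk (MulAction.orbitRel (Subgroup.zpowers g) V) u = a ∧
    Quotient.mk (MulAction.orbitRel (Subgroup.zpowers g) V) v = b ∧
    Relation.TransGen (dirAdj Γ σ) u v

/-! A coloring `c` fails to be order preserving on `Γ^σ` exactly when some arc `u → v` has
`c v < c u`. Every edge being an arc in exactly one direction, this says that some edge does not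
point to its larger color, which is the failure of weak compatibility. Hence the pairs lying over a
fixed `σ` are the order-preserving maps on `Γ^σ`, and counting pairs by `σ` gives the sum. -/

universe u w

section Orientation

variable {V : Type*} {Γ : SimpleGraph V} {σ : GraphOri Γ} {u v : V}

theorem dirAdj_iff_head_eq (h : Γ.Adj u v) :
    dirAdj Γ σ u v ↔ σ.1 ⟨s(u, v), Γ.mem_edgeSet.mpr h⟩ = v :=
  exists_prop_of_true h

theorem dirAdj_swap_iff_head_eq (h : Γ.Adj u v) :
    dirAdj Γ σ v u ↔ σ.1 ⟨s(u, v), Γ.mem_edgeSet.mpr h⟩ = u := by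
  simp only [dirAdj_iff_head_eq h.symm, Sym2.eq_swap]

theorem dirAdj_swap_iff_not_dirAdj (h : Γ.Adj u v) : dirAdj Γ σ v u ↔ ¬ dirAdj Γ σ u v := by
  rw [dirAdj_iff_head_eq h, dirAdj_swap_iff_head_eq h]
  refine ⟨fun hu hv => h.ne (hu.symm.trans hv), ?_⟩
  exact (Sym2.mem_iff.mp (σ.2 ⟨s(u, v), Γ.mem_edgeSet.mpr h⟩)).resolve_right

instance GraphOri.instFinite [Finite V] : Finite (GraphOri Γ) :=
  Subtype.finite

end Orientation

section WeaklyCompatible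

/-- Weak compatibility of an orientation with a coloring by an arbitrary ordered set. For colors
in `Fin n` this unfolds to the same proposition as `weakCompat`. -/
def WeaklyCompatible {V α : Type*} [LT α] (Γ : SimpleGraph V) (c : V → α)
    (σ : GraphOri Γ) : Prop :=
  ∀ (u v : V) (h : Γ.Adj u v), c u < c v → σ.1 ⟨s(u, v), Γ.mem_edgeSet.mpr h⟩ = v

variable {V α : Type*} [LinearOrder α] {Γ : SimpleGraph V} {σ : GraphOri Γ} {c : V → α}

theorem weaklyCompatible_iff_forall_dirAdj_le :
    WeaklyCompatible Γ c σ ↔ ∀ u v : V, dirAdj Γ σ u v → c u ≤ c v := by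
  constructor
  · intro hc u v huv
    by_contra! hlt
    have hvu : dirAdj Γ σ v u := ⟨huv.1.symm, hc v u huv.1.symm hlt⟩
    exact (dirAdj_swap_iff_not_dirAdj huv.1).mp hvu huv
  · intro hc u v h hlt
    rw [← dirAdj_iff_head_eq h, dirAdj_swap_iff_not_dirAdj h.symm]
    exact fun hvu => (hc v u hvu).not_gt hlt

theorem weaklyCompatible_iff_forall_transGen_le :
    WeaklyCompatible Γ c σ ↔ ∀ u v : V, Relation.TransGen (dirAdj Γ σ) u v → c u ≤ c v := by
  rw [weaklyCompatible_iff_forall_dirAdj_le]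
  refine ⟨fun hc u v huv => ?_, fun hc u v huv => hc u v (.single huv)⟩
  exact Relation.transGen_minimal (r' := Order.Preimage c (· ≤ ·)) hc u v huv

end WeaklyCompatible

/-- The decomposition of the `g`-fixed weakly compatible pairs `(c, σ)` into fibers over the
orientation `σ`, each fiber being identified with the `g`-fixed order-preserving maps on `Γ^σ`. -/
def fixedPairEquivSigma {V G α : Type*} [LinearOrder α] [Group G] [MulAction G V]
    (Γ : SimpleGraph V) (hact : ∀ (g : G) (u v : V), Γ.Adj u v → Γ.Adj (g • u) (g • v)) (g : G) :
    {p : (V → α) × GraphOri Γ //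
        oriAcyclic Γ p.2 ∧ WeaklyCompatible Γ p.1 p.2 ∧
        (∀ x : V, p.1 (g⁻¹ • x) = p.1 x) ∧ oriSMulEq Γ hact g p.2 p.2} ≃
      Σ σ : {σ : GraphOri Γ // oriAcyclic Γ σ ∧ oriSMulEq Γ hact g σ σ},
        {φ : V → α //
          (∀ u v : V, Relation.TransGen (dirAdj Γ σ.1) u v → φ u ≤ φ v) ∧
          ∀ x : V, φ (g⁻¹ • x) = φ x} where
  toFun p := ⟨⟨p.1.2, p.2.1, p.2.2.2.2⟩,
    ⟨p.1.1, weaklyCompatible_iff_forall_transGen_le.mp p.2.2.1, p.2.2.2.1⟩⟩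
  invFun q := ⟨(q.2.1, q.1.1), q.1.2.1,
    weaklyCompatible_iff_forall_transGen_le.mpr q.2.2.1, q.2.2.2, q.1.2.2⟩
  left_inv _ := rfl
  right_inv _ := rfl

theorem natCard_eq_finsum_of_mk_eq_sum {α : Type (max u w)} {ι : Type u} {β : ι → Type w}
    [Finite ι] [∀ i, Finite (β i)]
    (h : Cardinal.mk α = Cardinal.sum fun i => Cardinal.mk (β i)) :
    Nat.card α = ∑ᶠ i, Nat.card (β i) := by
  have := Fintype.ofFinite ι
  rw [finsum_eq_sum_of_fintype, ← Nat.card_sigma, Nat.card, h, ← Cardinal.mk_sigma, Nat.card]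

theorem stmt_14_general {V : Type u} {G : Type*} {α : Type w} [LinearOrder α] [Group G]
    [MulAction G V] (Γ : SimpleGraph V)
    (hact : ∀ (g : G) (u v : V), Γ.Adj u v → Γ.Adj (g • u) (g • v)) (g : G) :
    Cardinal.mk {p : (V → α) × GraphOri Γ //
        oriAcyclic Γ p.2 ∧ WeaklyCompatible Γ p.1 p.2 ∧
        (∀ x : V, p.1 (g⁻¹ • x) = p.1 x) ∧ oriSMulEq Γ hact g p.2 p.2} =
      Cardinal.sum fun σ : {σ : GraphOri Γ // oriAcyclic Γ σ ∧ oriSMulEq Γ hact g σ σ} =>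
        Cardinal.mk {φ : V → α //
          (∀ u v : V, Relation.TransGen (dirAdj Γ σ.1) u v → φ u ≤ φ v) ∧
          ∀ x : V, φ (g⁻¹ • x) = φ x} :=
  (Cardinal.mk_congr (fixedPairEquivSigma Γ hact g)).trans (Cardinal.mk_sigma _)

/-- Let `Γ` be a finite simple graph, `G` a finite group acting on `Γ`
by automorphisms, `g ∈ G`, and `n ≥ 1`.  Then the number of weakly compatible pairs
`(c,σ)` of an `n`-coloring `c` and an acyclic orientation `σ` that are fixed by `g`
satisfies `|Σ_n(Γ)^g| = Σ_{σ∈Σ^g} |Hom(Γ^σ,[n])^g|`, where the sum ranges over acyclic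
orientations `σ` fixed by `g` and `Hom(Γ^σ,[n])^g` is the set of `g`-fixed order
preserving maps from the poset `Γ^σ` to `[n]`. -/
theorem stmt_14 {V G : Type*} [Fintype V] [DecidableEq V] [Group G] [Fintype G]
    [MulAction G V] (Γ : SimpleGraph V)
    (hact : ∀ (g : G) (u v : V), Γ.Adj u v → Γ.Adj (g • u) (g • v))
    (g : G) (n : ℕ) (hn : 1 ≤ n) :
    Nat.card {p : (V → Fin n) × GraphOri Γ //
        oriAcyclic Γ p.2 ∧ weakCompat Γ p.1 p.2 ∧
        (∀ x : V, p.1 (g⁻¹ • x) = p.1 x) ∧ oriSMulEq Γ hact g p.2 p.2} =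
      ∑ᶠ σ : {σ : GraphOri Γ // oriAcyclic Γ σ ∧ oriSMulEq Γ hact g σ σ},
        Nat.card {φ : V → Fin n //
          (∀ u v : V, Relation.TransGen (dirAdj Γ σ.1) u v → φ u ≤ φ v) ∧
          ∀ x : V, φ (g⁻¹ • x) = φ x} :=
  natCard_eq_finsum_of_mk_eq_sum (stmt_14_general Γ hact g)
end
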